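/- arXiv:2503.23164 — 2 statements merged into one kernel-verified Lean document; each statement's English description precedes it below -/
import Mathlib

section
/- Fix δ > 0 and ε > 0. Then there exist η > 0 and n₀ such that for all n ≥ n₀ and all integers M, k with M/N ∈ [δ, 1−δ] and k/n ∈ [δ, 1−δ], with probability at least 1 − exp(−n^η) over G = G_{n,M} the following holds: for all integers z, n·|P_S(e(S) = z) − φ(z)| ≤ n^{−1/14+ε}, where S is a uniformly random k-element subset of [n] and φ is the probability density function of a normal random variable with mean K·M/N and variance λ·n². -/
/-!
The probability that `e(S) = z` is recovered by Fourier inversion from the characteristic function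
`ψ(θ)` of `e(S) - K M / N` over a random `k`-set `S`, viewed as a function of the graph `G`, whose
edges are first taken to be independent with probability `p = M / N`.

At frequencies `|θ| ≤ T`, with `T` slightly larger than `1 / n`, the mean of `ψ(θ)` over `G` is
nearly Gaussian, and its gradient with respect to the edges is small by Bessel's inequality, so
iterating the Poincaré inequality on the cube (as Aida and Stroock do) gives exponential
concentration of `ψ(θ)`. By Jensen the exponential moment survives averaging over `θ`, so no union
bound over frequencies is needed. At frequencies `T < |θ| ≤ π`, `𝔼 |ψ(θ)|²` is an average over
pairs of `k`-sets: pairs that differ in many vertices contribute exponentially little, and the other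
pairs are rare. Conditioning on exactly `M` edges multiplies all failure probabilities by at most
`N + 1`, which exponential bounds absorb.
-/

open Finset MeasureTheory ProbabilityTheory

noncomputable section

/-- Uniform probability of an event `P` over a finite sample space `Ω`. -/
def Pru {α : Type*} (Ω : Finset α) (P : α → Prop) : ℝ := by
  classical exact ((Ω.filter P).card : ℝ) / Ω.card

/-- Expectation of `f` under the uniform distribution on `Ω`. -/
def Exu {α : Type*} (Ω : Finset α) (f : α → ℝ) : ℝ := (∑ a ∈ Ω, f a) / Ω.card

/-- Variance of `f` under the uniform distribution on `Ω`. -/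
def Varu {α : Type*} (Ω : Finset α) (f : α → ℝ) : ℝ := Exu Ω (fun a => (f a - Exu Ω f) ^ 2)

/-- Conditional expectation of `f` given the value of `g`, under uniform distribution on `Ω`. -/
def condExpU {α β : Type*} (Ω : Finset α) (f : α → ℝ) (g : α → β) (ω : α) : ℝ := by
  classical exact Exu (Ω.filter (fun ω' => g ω' = g ω)) f

/-- The edge set of the complete graph on `[n]`. -/
def completeEdges (n : ℕ) : Finset (Sym2 (Fin n)) := by
  classical exact Finset.univ.filter (fun e => ¬ e.IsDiag)

/-- A finset of `Sym2`s is a graph if it has no loops. -/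
def IsGraph {n : ℕ} (G : Finset (Sym2 (Fin n))) : Prop := ∀ e ∈ G, ¬ e.IsDiag

/-- The sample space of `G_{n,M}`: all graphs on `[n]` with exactly `M` edges. -/
def graphsM (n M : ℕ) : Finset (Finset (Sym2 (Fin n))) := by
  classical exact (completeEdges n).powerset.filter (fun G => G.card = M)

/-- `e(S)`: number of edges of `G` with both endpoints in `S`. -/
def edgesIn {n : ℕ} (G : Finset (Sym2 (Fin n))) (S : Finset (Fin n)) : ℕ := by
  classical exact (G.filter (fun e => ∀ v ∈ e, v ∈ S)).card

/-- `d_S(v)`: number of neighbours of `v` (in graph `G`) lying in `S`. -/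
def dS {n : ℕ} (G : Finset (Sym2 (Fin n))) (S : Finset (Fin n)) (v : Fin n) : ℕ := by
  classical exact (S.filter (fun w => s(v, w) ∈ G)).card

/-- All `k`-element subsets of `[n]`. -/
def kSets (n k : ℕ) : Finset (Finset (Fin n)) := Finset.univ.powersetCard k

/-- Probability of an event under the uniform random graph `G_{n,M}`. -/
def PrGnM (n M : ℕ) (P : Finset (Sym2 (Fin n)) → Prop) : ℝ := Pru (graphsM n M) P

/-- Probability of an event under the binomial random graph `G_{n,p}`. -/
def PrGnp (n : ℕ) (p : ℝ) (P : Finset (Sym2 (Fin n)) → Prop) : ℝ := by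
  classical exact ∑ G ∈ (completeEdges n).powerset,
    if (P G) then p ^ G.card * (1 - p) ^ ((completeEdges n).card - G.card) else 0

/-- `N = n(n-1)/2` as a real number. -/
def Nr (n : ℕ) : ℝ := (n : ℝ) * ((n : ℝ) - 1) / 2

/-- `K = k(k-1)/2` as a real number. -/
def Kr (k : ℕ) : ℝ := (k : ℝ) * ((k : ℝ) - 1) / 2

/-- `λ = ((n²-k²)k²/(2n⁴))·(M(N-M)/N²)`. -/
def lamP (n M k : ℕ) : ℝ :=
  (((n:ℝ)^2 - (k:ℝ)^2) * (k:ℝ)^2 / (2 * (n:ℝ)^4)) * ((M:ℝ) * (Nr n - (M:ℝ)) / (Nr n)^2)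

/-- The mean `K·M/N`. -/
def muP (n M k : ℕ) : ℝ := Kr k * (M:ℝ) / Nr n

/-- `W = (e(S) - K·M/N)/n`. -/
def Wfun (n M k : ℕ) (G : Finset (Sym2 (Fin n))) (S : Finset (Fin n)) : ℝ :=
  ((edgesIn G S : ℝ) - muP n M k) / n

/-- `V = Σ_v d(v)² - n·d(G)²`, i.e. `n` times the degree variance. -/
def Vdeg {n : ℕ} (G : Finset (Sym2 (Fin n))) : ℝ :=
  (∑ v : Fin n, (dS G Finset.univ v : ℝ) ^ 2) - (n:ℝ) * (2 * (G.card : ℝ) / n) ^ 2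

/-- Gaussian CDF with mean `m` and variance `v`. -/
def gaussCdf (m v z : ℝ) : ℝ := ((gaussianReal m v.toNNReal) (Set.Iic z)).toReal

/-- Gaussian measure of a set, mean `m`, variance `v`. -/
def gaussMeas (m v : ℝ) (A : Set ℝ) : ℝ := ((gaussianReal m v.toNNReal) A).toReal

/-- Gaussian density with mean `m` and variance `v`. -/
def gaussPdf (m v x : ℝ) : ℝ := gaussianPDFReal m v.toNNReal x

/-- `P(Y ∈ ·)` for `Y ~ Bin(ν, p)`. -/
def binomPr (ν : ℕ) (p : ℝ) (P : ℕ → Prop) : ℝ := by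
  classical exact ∑ j ∈ Finset.range (ν + 1),
    if (P j) then (ν.choose j : ℝ) * p ^ j * (1 - p) ^ (ν - j) else 0

/-- Sample space for "uniform `k`-set `S`, then uniform `x ∈ S` and `x̄ ∈ S̄`". -/
def SwapΩ (n k : ℕ) : Finset (Σ _ : Finset (Fin n), Fin n × Fin n) :=
  (kSets n k).sigma (fun S => S ×ˢ Sᶜ)

/-- A triple `(a, r, t)` is valid for `β`. -/
def ValidTriple (β : ℝ) (n a r t : ℕ) : Prop :=
  a ≤ r ∧
  (∃ c : ℝ, 1/2 ≤ c ∧ c ≤ 1 ∧ (a : ℝ) = c * (t:ℝ) ^ ((3:ℝ)/2) * (n:ℝ) ^ (2*β - 1/2)) ∧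
  (r : ℝ) ≤ (n:ℝ) ^ (-β) * Real.sqrt ((n:ℝ) * (t:ℝ))

open scoped BigOperators

/-! ### Random subsets with independent inclusions -/

/-- The expectation of `f G` when the random subset `G` of `E` contains each element independently
with probability `p`. It is a finite sum, so that `f` may take values in any real vector space. -/
def bernoulliExpect {ι F : Type*} [DecidableEq ι] [AddCommGroup F] [Module ℝ F] (p : ℝ)
    (E : Finset ι) (f : Finset ι → F) : F :=
  ∑ G ∈ E.powerset, (p ^ #G * (1 - p) ^ #(E \ G)) • f G

section bernoulliExpect

variable {ι κ F : Type*} [DecidableEq ι] [AddCommGroup F] [Module ℝ F] {p : ℝ} {E : Finset ι}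

lemma bernoulliExpect_insert {a : ι} (ha : a ∉ E) (f : Finset ι → F) :
    bernoulliExpect p (insert a E) f =
      p • bernoulliExpect p E (fun G => f (insert a G)) + (1 - p) • bernoulliExpect p E f := by
  unfold bernoulliExpect
  rw [sum_powerset_insert ha, smul_sum, smul_sum, add_comm]
  congr 1 <;> refine sum_congr rfl fun G hG => ?_
  · have haG : a ∉ G := fun h => ha (mem_powerset.1 hG h)
    rw [card_insert_of_notMem haG, insert_sdiff_insert, sdiff_insert_of_notMem ha, smul_smul,
      pow_succ']
    ring_nf
  · have haG : a ∉ G := fun h => ha (mem_powerset.1 hG h)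
    rw [insert_sdiff_of_notMem _ haG, card_insert_of_notMem (by simp [ha]), smul_smul, pow_succ']
    ring_nf

lemma bernoulliExpect_const (E : Finset ι) (c : F) : bernoulliExpect p E (fun _ => c) = c := by
  induction E using Finset.induction_on with
  | empty => simp [bernoulliExpect]
  | insert a E ha ih => rw [bernoulliExpect_insert ha, ih, ← add_smul, add_sub_cancel, one_smul]

lemma bernoulliExpect_congr {f g : Finset ι → F} (h : ∀ G ⊆ E, f G = g G) :
    bernoulliExpect p E f = bernoulliExpect p E g :=
  sum_congr rfl fun G hG => by rw [h G (mem_powerset.1 hG)]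

lemma bernoulliExpect_add (f g : Finset ι → F) :
    bernoulliExpect p E (fun G => f G + g G) = bernoulliExpect p E f + bernoulliExpect p E g := by
  simp [bernoulliExpect, sum_add_distrib]

lemma bernoulliExpect_const_mul (c : ℝ) (f : Finset ι → ℝ) :
    bernoulliExpect p E (fun G => c * f G) = c * bernoulliExpect p E f := by
  simp only [bernoulliExpect, mul_sum, smul_eq_mul, mul_left_comm]

lemma bernoulliExpect_sum (s : Finset κ) (f : κ → Finset ι → F) :
    bernoulliExpect p E (fun G => ∑ i ∈ s, f i G) = ∑ i ∈ s, bernoulliExpect p E (f i) := by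
  simp only [bernoulliExpect, smul_sum]
  exact sum_comm

lemma bernoulliExpect_expect (s : Finset κ) (f : κ → Finset ι → ℂ) :
    bernoulliExpect p E (fun G => 𝔼 i ∈ s, f i G) = 𝔼 i ∈ s, bernoulliExpect p E (f i) := by
  simp only [bernoulliExpect, ← smul_expect, expect_sum_comm]

lemma map_bernoulliExpect {F' : Type*} [AddCommGroup F'] [Module ℝ F'] (T : F →ₗ[ℝ] F')
    (f : Finset ι → F) :
    T (bernoulliExpect p E f) = bernoulliExpect p E (fun G => T (f G)) := by
  simp [bernoulliExpect]

lemma bernoulliExpect_prod (E : Finset ι) (y : ι → ℂ) :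
    bernoulliExpect p E (fun G => ∏ e ∈ G, y e) = ∏ e ∈ E, (p * y e + (1 - p)) := by
  rw [prod_add]
  refine sum_congr rfl fun G _ => ?_
  rw [prod_mul_distrib, prod_const, prod_const, Complex.real_smul]
  push_cast
  ring

lemma bernoulliExpect_mono (hp : p ∈ Set.Icc 0 1) {f g : Finset ι → ℝ}
    (h : ∀ G ⊆ E, f G ≤ g G) : bernoulliExpect p E f ≤ bernoulliExpect p E g := by
  have hp' : 0 ≤ 1 - p := sub_nonneg.2 hp.2
  have hp0 : 0 ≤ p := hp.1
  exact sum_le_sum fun G hG =>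
    smul_le_smul_of_nonneg_left (h G (mem_powerset.1 hG)) (by positivity)

lemma bernoulliExpect_nonneg (hp : p ∈ Set.Icc 0 1) {f : Finset ι → ℝ}
    (h : ∀ G ⊆ E, 0 ≤ f G) : 0 ≤ bernoulliExpect p E f := by
  simpa only [bernoulliExpect_const] using bernoulliExpect_mono hp h

lemma sq_bernoulliExpect_le (hp : p ∈ Set.Icc 0 1) (f : Finset ι → ℝ) :
    bernoulliExpect p E f ^ 2 ≤ bernoulliExpect p E (fun G => f G ^ 2) := by
  have hw : ∑ G ∈ E.powerset, p ^ #G * (1 - p) ^ #(E \ G) = 1 := by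
    simpa [bernoulliExpect] using bernoulliExpect_const (p := p) E (1 : ℝ)
  have hp' : 0 ≤ 1 - p := sub_nonneg.2 hp.2
  have hp0 : 0 ≤ p := hp.1
  exact even_two.convexOn_pow.map_sum_le (fun G _ => by positivity) hw fun _ _ => Set.mem_univ _

end bernoulliExpect

/-! ### Concentration on the biased cube -/

/-- The discrete derivative of a function of a set `G` in the direction `e`: the change of `f` as
`e` is switched from absent to present, whether or not `e` lies in `G`. -/
def discreteDeriv {ι F : Type*} [DecidableEq ι] [Sub F] (f : Finset ι → F) (e : ι)
    (G : Finset ι) : F :=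
  f (insert e G) - f (G.erase e)

section Concentration

variable {ι : Type*} [DecidableEq ι] {p : ℝ} {E : Finset ι} {f : Finset ι → ℝ} {V : ℝ}

lemma discreteDeriv_insert_of_ne {a e : ι} (h : e ≠ a) (G : Finset ι) :
    discreteDeriv f e (insert a G) = discreteDeriv (fun G => f (insert a G)) e G := by
  rw [discreteDeriv, discreteDeriv, insert_comm, erase_insert_of_ne h.symm]

lemma discreteDeriv_const_mul (c : ℝ) (e : ι) (G : Finset ι) :
    discreteDeriv (fun G => c * f G) e G = c * discreteDeriv f e G :=
  (mul_sub _ _ _).symm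

lemma bernoulliExpect_sq_discreteDeriv_insert_self {a : ι} (ha : a ∉ E) :
    bernoulliExpect p (insert a E) (fun G => discreteDeriv f a G ^ 2) =
      bernoulliExpect p E (fun G => (f (insert a G) + -1 * f G) ^ 2) := by
  have h : ∀ G ⊆ E, discreteDeriv f a G = f (insert a G) + -1 * f G := fun G hG => by
    rw [discreteDeriv, erase_eq_of_notMem fun h => ha (hG h)]; ring
  have h' : ∀ G ⊆ E, discreteDeriv f a (insert a G) = f (insert a G) + -1 * f G := fun G hG => by
    rw [discreteDeriv, insert_idem, erase_insert fun h => ha (hG h)]; ring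
  rw [bernoulliExpect_insert ha, bernoulliExpect_congr fun G hG => by rw [h' G hG],
    bernoulliExpect_congr (f := fun G => discreteDeriv f a G ^ 2) fun G hG => by rw [h G hG],
    ← add_smul, add_sub_cancel, one_smul]

/-- The Poincaré (Efron–Stein) inequality on the biased cube. -/
lemma bernoulliExpect_sq_sub_sq_le (hp : p ∈ Set.Icc 0 1) (E : Finset ι) (f : Finset ι → ℝ) :
    bernoulliExpect p E (fun G => f G ^ 2) - bernoulliExpect p E f ^ 2 ≤
      p * (1 - p) * ∑ e ∈ E, bernoulliExpect p E (fun G => discreteDeriv f e G ^ 2) := by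
  induction E using Finset.induction_on generalizing f with
  | empty => simp [bernoulliExpect]
  | insert a E ha ih =>
    have hold : ∀ e ∈ E, bernoulliExpect p (insert a E) (fun G => discreteDeriv f e G ^ 2) =
        p * bernoulliExpect p E (fun G => discreteDeriv (fun G => f (insert a G)) e G ^ 2) +
          (1 - p) * bernoulliExpect p E (fun G => discreteDeriv f e G ^ 2) := fun e he => by
      simp only [bernoulliExpect_insert ha, smul_eq_mul,
        discreteDeriv_insert_of_ne (ne_of_mem_of_not_mem he ha)]
    have hnew : (bernoulliExpect p E (fun G => f (insert a G)) - bernoulliExpect p E f) ^ 2 ≤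
        bernoulliExpect p (insert a E) (fun G => discreteDeriv f a G ^ 2) := by
      rw [bernoulliExpect_sq_discreteDeriv_insert_self ha]
      refine le_of_eq_of_le ?_ (sq_bernoulliExpect_le hp _)
      rw [bernoulliExpect_add, bernoulliExpect_const_mul]
      ring
    have hq : 0 ≤ 1 - p := sub_nonneg.2 hp.2
    have hpresent := mul_le_mul_of_nonneg_left (ih fun G => f (insert a G)) hp.1
    have habsent := mul_le_mul_of_nonneg_left (ih f) hq
    have hnew' := mul_le_mul_of_nonneg_left hnew (mul_nonneg hp.1 hq)
    rw [sum_insert ha, sum_congr rfl hold, sum_add_distrib, ← mul_sum, ← mul_sum,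
      bernoulliExpect_insert ha f, bernoulliExpect_insert ha]
    simp only [smul_eq_mul]
    nlinarith

lemma sq_discreteDeriv_exp_le {e : ι} {G : Finset ι} (h : |discreteDeriv f e G| ≤ 1) :
    discreteDeriv (fun G => Real.exp (f G)) e G ^ 2 ≤
      4 * Real.exp (2 * f G) * discreteDeriv f e G ^ 2 := by
  have key : ∀ d, |d| ≤ 1 → (Real.exp (f G) * (Real.exp d - 1)) ^ 2 ≤
      4 * Real.exp (2 * f G) * d ^ 2 := fun d hd => by
    have hd' := pow_le_pow_left₀ (abs_nonneg _) (Real.abs_exp_sub_one_le hd) 2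
    rw [sq_abs, mul_pow, sq_abs] at hd'
    rw [mul_pow, ← Real.exp_nat_mul]
    push_cast
    nlinarith [Real.exp_pos (2 * f G)]
  unfold discreteDeriv at h ⊢
  by_cases he : e ∈ G
  · rw [insert_eq_of_mem he] at h ⊢
    refine le_of_eq_of_le ?_ ((key _ (by rwa [abs_neg])).trans_eq (by rw [neg_sq]))
    rw [mul_sub, ← Real.exp_add, ← neg_sq]
    ring_nf
  · rw [erase_eq_of_notMem he] at h ⊢
    refine le_of_eq_of_le ?_ (key _ h)
    rw [mul_sub, ← Real.exp_add]
    ring_nf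

lemma sum_bernoulliExpect_sq_discreteDeriv_exp_le (hp : p ∈ Set.Icc 0 1)
    (hV : ∀ G ⊆ E, ∑ e ∈ E, discreteDeriv f e G ^ 2 ≤ V) (hV1 : V ≤ 1) :
    ∑ e ∈ E, bernoulliExpect p E (fun G => discreteDeriv (fun G => Real.exp (f G)) e G ^ 2) ≤
      4 * V * bernoulliExpect p E (fun G => Real.exp (2 * f G)) := by
  rw [← bernoulliExpect_sum, ← bernoulliExpect_const_mul]
  refine bernoulliExpect_mono hp fun G hG => ?_
  calc ∑ e ∈ E, discreteDeriv (fun G => Real.exp (f G)) e G ^ 2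
      ≤ ∑ e ∈ E, 4 * Real.exp (2 * f G) * discreteDeriv f e G ^ 2 := by
        refine sum_le_sum fun e he => sq_discreteDeriv_exp_le ?_
        rw [← sq_le_one_iff_abs_le_one]
        exact (single_le_sum (f := fun e => discreteDeriv f e G ^ 2)
          (fun _ _ => sq_nonneg _) he).trans ((hV G hG).trans hV1)
    _ = 4 * Real.exp (2 * f G) * ∑ e ∈ E, discreteDeriv f e G ^ 2 := by rw [mul_sum]
    _ ≤ 4 * Real.exp (2 * f G) * V := by gcongr; exact hV G hG
    _ = 4 * V * Real.exp (2 * f G) := by ring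

/-- One step of the Aida–Stroock iteration: the Poincaré inequality applied to `exp f`. -/
lemma bernoulliExpect_exp_two_mul_le (hp : p ∈ Set.Icc 0 1)
    (hV : ∀ G ⊆ E, ∑ e ∈ E, discreteDeriv f e G ^ 2 ≤ V) (hV1 : V ≤ 1 / 2) :
    bernoulliExpect p E (fun G => Real.exp (2 * f G)) ≤
      Real.exp (2 * V) * bernoulliExpect p E (fun G => Real.exp (f G)) ^ 2 := by
  have hV0 : 0 ≤ V := (sum_nonneg fun _ _ => sq_nonneg _).trans (hV ∅ (empty_subset _))
  set H := bernoulliExpect p E (fun G => Real.exp (2 * f G))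
  set m := bernoulliExpect p E (fun G => Real.exp (f G))
  have hH0 : 0 ≤ H := bernoulliExpect_nonneg hp fun _ _ => (Real.exp_pos _).le
  have hpoincare : H - m ^ 2 ≤ V * H := by
    have h := bernoulliExpect_sq_sub_sq_le hp E fun G => Real.exp (f G)
    simp only [← Real.exp_nat_mul, Nat.cast_ofNat] at h
    have hpq : p * (1 - p) ≤ 1 / 4 := by nlinarith [sq_nonneg (p - 1 / 2)]
    have hgrad := mul_le_mul hpq
      (sum_bernoulliExpect_sq_discreteDeriv_exp_le hp hV (hV1.trans (by norm_num)))
      (sum_nonneg fun _ _ => bernoulliExpect_nonneg hp fun _ _ => sq_nonneg _) (by norm_num)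
    linarith
  have hexp : 1 ≤ Real.exp (2 * V) * (1 - V) := by
    nlinarith [Real.add_one_le_exp (2 * V)]
  calc H ≤ Real.exp (2 * V) * (1 - V) * H := le_mul_of_one_le_left hH0 hexp
    _ = Real.exp (2 * V) * (H - V * H) := by ring
    _ ≤ Real.exp (2 * V) * m ^ 2 := by gcongr; linarith

lemma bernoulliExpect_exp_le_of_abs_le (hp : p ∈ Set.Icc 0 1) (hf : bernoulliExpect p E f = 0)
    {B : ℝ} (hB : ∀ G ⊆ E, |f G| ≤ B) (hB1 : B ≤ 1) :
    bernoulliExpect p E (fun G => Real.exp (f G)) ≤ Real.exp (B ^ 2) := by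
  have hexp : ∀ G ⊆ E, Real.exp (f G) ≤ f G + (1 + B ^ 2) := fun G hG => by
    have h := (abs_le.1 (Real.abs_exp_sub_one_sub_id_le ((hB G hG).trans hB1))).2
    have hsq := pow_le_pow_left₀ (abs_nonneg _) (hB G hG) 2
    rw [sq_abs] at hsq
    linarith
  calc bernoulliExpect p E (fun G => Real.exp (f G))
      ≤ bernoulliExpect p E (fun G => f G + (1 + B ^ 2)) := bernoulliExpect_mono hp hexp
    _ = B ^ 2 + 1 := by rw [bernoulliExpect_add, hf, bernoulliExpect_const]; ring
    _ ≤ Real.exp (B ^ 2) := Real.add_one_le_exp _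

lemma bernoulliExpect_exp_le_of_abs_le_two_pow (hp : p ∈ Set.Icc 0 1)
    (hf : bernoulliExpect p E f = 0) (hV : ∀ G ⊆ E, ∑ e ∈ E, discreteDeriv f e G ^ 2 ≤ V)
    (hV1 : V ≤ 1) {B : ℝ} (hB : ∀ G ⊆ E, |f G| ≤ B) {j : ℕ} (hBj : B ≤ 2 ^ j) :
    bernoulliExpect p E (fun G => Real.exp (f G)) ≤ Real.exp (V + B ^ 2 / 2 ^ j) := by
  induction j generalizing f V B with
  | zero =>
    have hV0 : 0 ≤ V := (sum_nonneg fun _ _ => sq_nonneg _).trans (hV ∅ (empty_subset _))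
    refine (bernoulliExpect_exp_le_of_abs_le hp hf hB (by simpa using hBj)).trans ?_
    simpa using hV0
  | succ j ih =>
    have hV' : ∀ G ⊆ E, ∑ e ∈ E, discreteDeriv (fun G => 1 / 2 * f G) e G ^ 2 ≤ V / 4 :=
      fun G hG => by
        simp only [discreteDeriv_const_mul, mul_pow, ← mul_sum]
        linarith [hV G hG]
    have hhalf : bernoulliExpect p E (fun G => Real.exp (1 / 2 * f G)) ≤
        Real.exp (V / 4 + (B / 2) ^ 2 / 2 ^ j) := by
      refine ih (by rw [bernoulliExpect_const_mul, hf, mul_zero]) hV' (by linarith) (fun G hG => ?_)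
        (by rw [pow_succ] at hBj; linarith)
      rw [abs_mul, abs_of_pos (by norm_num : (0 : ℝ) < 1 / 2)]
      linarith [hB G hG]
    have hstep := bernoulliExpect_exp_two_mul_le hp hV' (by linarith)
    simp only [← mul_assoc, mul_one_div_cancel (two_ne_zero' ℝ), one_mul] at hstep
    refine hstep.trans ((mul_le_mul_of_nonneg_left (pow_le_pow_left₀
      (bernoulliExpect_nonneg hp fun _ _ => (Real.exp_pos _).le) hhalf 2)
      (Real.exp_pos _).le).trans_eq ?_)
    rw [← Real.exp_nat_mul, ← Real.exp_add]
    congr 1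
    field_simp
    push_cast
    ring

lemma bernoulliExpect_exp_le (hp : p ∈ Set.Icc 0 1) (hf : bernoulliExpect p E f = 0)
    (hV : ∀ G ⊆ E, ∑ e ∈ E, discreteDeriv f e G ^ 2 ≤ V) (hV1 : V ≤ 1) :
    bernoulliExpect p E (fun G => Real.exp (f G)) ≤ Real.exp V := by
  set B := ∑ G ∈ E.powerset, |f G|
  have hB : ∀ G ⊆ E, |f G| ≤ B := fun G hG =>
    single_le_sum (f := fun G => |f G|) (fun _ _ => abs_nonneg _) (mem_powerset.2 hG)
  have hpow := tendsto_pow_atTop_atTop_of_one_lt (one_lt_two (α := ℝ))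
  have hlim : Filter.Tendsto (fun j : ℕ => Real.exp (V + B ^ 2 / 2 ^ j)) Filter.atTop
      (nhds (Real.exp (V + 0))) :=
    (Real.continuous_exp.tendsto _).comp (tendsto_const_nhds.add (hpow.const_div_atTop _))
  rw [add_zero] at hlim
  refine ge_of_tendsto hlim ((hpow.eventually_ge_atTop B).mono fun j hj => ?_)
  exact bernoulliExpect_exp_le_of_abs_le_two_pow hp hf hV hV1 hB hj

end Concentration

/-! ### Conditioning on the number of elements -/

/-- The mass of the binomial distribution with parameters `N` and `p` at `j`. -/
def binomialMass (N : ℕ) (p : ℝ) (j : ℕ) : ℝ := N.choose j * (p ^ j * (1 - p) ^ (N - j))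

section Conditioning

variable {N : ℕ} {p : ℝ}

lemma binomialMass_nonneg (hp : p ∈ Set.Icc 0 1) (N j : ℕ) : 0 ≤ binomialMass N p j := by
  have h0 : 0 ≤ p := hp.1
  have h1 : 0 ≤ 1 - p := sub_nonneg.2 hp.2
  unfold binomialMass
  positivity

lemma sum_range_binomialMass (N : ℕ) (p : ℝ) : ∑ j ∈ range (N + 1), binomialMass N p j = 1 := by
  have h := add_pow p (1 - p) N
  rw [add_sub_cancel, one_pow] at h
  exact h ▸ sum_congr rfl fun j _ => mul_comm _ _

lemma binomialMass_succ_mul {j : ℕ} (hj : j < N) :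
    binomialMass N p (j + 1) * ((j + 1) * (1 - p)) = binomialMass N p j * ((N - j) * p) := by
  have hchoose : (N.choose (j + 1) : ℝ) * (j + 1) = N.choose j * (N - j) := by
    rw [← Nat.cast_sub hj.le]
    exact_mod_cast Nat.choose_succ_right_eq N j
  have hpow : (1 - p) ^ (N - j) = (1 - p) ^ (N - (j + 1)) * (1 - p) := by
    rw [← pow_succ]; congr 1; omega
  unfold binomialMass
  rw [hpow, pow_succ]
  linear_combination p ^ j * p * (1 - p) ^ (N - (j + 1)) * (1 - p) * hchoose

lemma binomialMass_le_succ (hp : p ∈ Set.Ioo 0 1) {j : ℕ} (hj : (j : ℝ) + 1 ≤ (N + 1) * p) :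
    binomialMass N p j ≤ binomialMass N p (j + 1) := by
  have h0 : 0 ≤ binomialMass N p j := binomialMass_nonneg (Set.Ioo_subset_Icc_self hp) N j
  have hjN : (j : ℝ) + 1 < N + 1 := hj.trans_lt (mul_lt_of_lt_one_right (by positivity) hp.2)
  have hrec := binomialMass_succ_mul (p := p) (by exact_mod_cast lt_of_add_lt_add_right hjN : j < N)
  refine le_of_mul_le_mul_right ?_ (mul_pos j.cast_add_one_pos (sub_pos.2 hp.2))
  rw [hrec]
  exact mul_le_mul_of_nonneg_left (by linarith) h0

lemma binomialMass_succ_le (hp : p ∈ Set.Ioo 0 1) {j : ℕ} (hj : (N + 1) * p ≤ (j : ℝ) + 1) :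
    binomialMass N p (j + 1) ≤ binomialMass N p j := by
  have h0 := binomialMass_nonneg (Set.Ioo_subset_Icc_self hp) N
  rcases le_or_gt N j with hNj | hjN
  · have hzero : binomialMass N p (j + 1) = 0 := by
      simp [binomialMass, Nat.choose_eq_zero_of_lt (Nat.lt_succ_of_le hNj)]
    exact hzero ▸ h0 j
  · have hjN' : (j : ℝ) < N := by exact_mod_cast hjN
    refine le_of_mul_le_mul_right ?_ (mul_pos (sub_pos.2 hjN') hp.1)
    rw [← binomialMass_succ_mul hjN]
    exact mul_le_mul_of_nonneg_left (by linarith) (h0 _)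

lemma binomialMass_le_of_mul_eq (hp : p ∈ Set.Ioo 0 1) {M : ℕ} (hM : N * p = M) (j : ℕ) :
    binomialMass N p j ≤ binomialMass N p M := by
  rcases le_total j M with h | h
  · refine Nat.decreasingInduction' (fun i hi _ ih => (binomialMass_le_succ hp ?_).trans ih) h
      le_rfl
    have hi' : (i : ℝ) + 1 ≤ M := by exact_mod_cast hi
    linarith [hp.1]
  · induction j, h using Nat.le_induction with
    | base => exact le_rfl
    | succ i hi ih =>
      refine (binomialMass_succ_le hp ?_).trans ih
      have hi' : (M : ℝ) ≤ i := by exact_mod_cast hi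
      linarith [hp.2]

lemma one_le_succ_mul_binomialMass (hp : p ∈ Set.Ioo 0 1) {M : ℕ} (hM : N * p = M) :
    1 ≤ (N + 1) * binomialMass N p M := by
  have h := sum_le_card_nsmul (range (N + 1)) _ _ fun j _ => binomialMass_le_of_mul_eq hp hM j
  rw [sum_range_binomialMass, card_range, nsmul_eq_mul] at h
  exact_mod_cast h

variable {ι : Type*} [DecidableEq ι] {E : Finset ι} {F : Finset ι → ℝ} {B : Finset (Finset ι)}
  {M : ℕ}

lemma card_mul_le_bernoulliExpect (hp : p ∈ Set.Icc 0 1) (hF : ∀ G ⊆ E, 0 ≤ F G)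
    (hB : B ⊆ E.powersetCard M) (hBF : ∀ G ∈ B, 1 ≤ F G) :
    #B * (p ^ M * (1 - p) ^ (#E - M)) ≤ bernoulliExpect p E F := by
  have h0 : 0 ≤ p := hp.1
  have h1 : 0 ≤ 1 - p := sub_nonneg.2 hp.2
  calc #B * (p ^ M * (1 - p) ^ (#E - M))
      = ∑ G ∈ B, p ^ M * (1 - p) ^ (#E - M) := by rw [sum_const, nsmul_eq_mul]
    _ ≤ ∑ G ∈ B, (p ^ #G * (1 - p) ^ #(E \ G)) • F G := by
        refine sum_le_sum fun G hG => ?_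
        obtain ⟨hGE, hGM⟩ := mem_powersetCard.1 (hB hG)
        rw [card_sdiff_of_subset hGE, hGM, smul_eq_mul]
        exact le_mul_of_one_le_right (by positivity) (hBF G hG)
    _ ≤ bernoulliExpect p E F :=
        sum_le_sum_of_subset_of_nonneg
          (fun G hG => mem_powerset.2 (mem_powersetCard.1 (hB hG)).1)
          fun G hG _ => smul_nonneg (by positivity) (hF G (mem_powerset.1 hG))

/-- Since `M` is the mode of the binomial distribution with mean `M`, conditioning the random subset
on having `M` elements costs a factor at most `#E + 1`. -/
lemma card_div_card_powersetCard_le (hp : p ∈ Set.Ioo 0 1) (hM : #E * p = M)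
    (hF : ∀ G ⊆ E, 0 ≤ F G) (hB : B ⊆ E.powersetCard M) (hBF : ∀ G ∈ B, 1 ≤ F G) :
    (#B : ℝ) / #(E.powersetCard M) ≤ (#E + 1) * bernoulliExpect p E F := by
  have hME : M ≤ #E := by
    have h := mul_le_of_le_one_right (Nat.cast_nonneg' (α := ℝ) #E) hp.2.le
    exact_mod_cast hM ▸ h
  rw [card_powersetCard, div_le_iff₀ (by exact_mod_cast Nat.choose_pos hME)]
  calc (#B : ℝ) ≤ #B * ((#E + 1) * binomialMass #E p M) :=
        le_mul_of_one_le_right (Nat.cast_nonneg _) (one_le_succ_mul_binomialMass hp hM)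
    _ = (#E + 1) * (#B * (p ^ M * (1 - p) ^ (#E - M))) * (#E).choose M := by
        unfold binomialMass; ring
    _ ≤ (#E + 1) * bernoulliExpect p E F * (#E).choose M := by
        gcongr
        exact card_mul_le_bernoulliExpect (Set.Ioo_subset_Icc_self hp) hF hB hBF

end Conditioning

/-! ### An almost orthogonal family of functions -/

section Bessel

variable {α ι : Type*} {Ω : Finset α} {E : Finset ι} {x : ι → α → ℝ} {R : ℝ}

lemma expect_sq_sum_mul_le (hR : ∀ e ∈ E, ∑ e' ∈ E, |𝔼 a ∈ Ω, x e a * x e' a| ≤ R) (c : ι → ℝ) :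
    𝔼 a ∈ Ω, (∑ e ∈ E, c e * x e a) ^ 2 ≤ R * ∑ e ∈ E, c e ^ 2 := by
  set w : ι → ι → ℝ := fun e e' => |𝔼 a ∈ Ω, x e a * x e' a| with hw
  have hsymm : ∀ e e', w e e' = w e' e := fun e e' => by simp only [hw, mul_comm]
  calc 𝔼 a ∈ Ω, (∑ e ∈ E, c e * x e a) ^ 2
      = ∑ e ∈ E, ∑ e' ∈ E, c e * c e' * 𝔼 a ∈ Ω, x e a * x e' a := by
        simp only [sq, sum_mul_sum, expect_sum_comm, mul_expect, mul_mul_mul_comm]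
    _ ≤ ∑ e ∈ E, ∑ e' ∈ E, (c e ^ 2 / 2 * w e e' + c e' ^ 2 / 2 * w e' e) := by
        gcongr with e _ e' _
        rw [hsymm e' e, ← add_mul]
        refine (le_abs_self _).trans ?_
        rw [abs_mul]
        gcongr
        rw [abs_le]
        constructor <;> nlinarith [sq_nonneg (c e - c e'), sq_nonneg (c e + c e')]
    _ = ∑ e ∈ E, c e ^ 2 * ∑ e' ∈ E, w e e' := by
        simp only [sum_add_distrib]
        rw [sum_comm (f := fun e e' => c e' ^ 2 / 2 * w e' e), ← sum_add_distrib]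
        refine sum_congr rfl fun e _ => ?_
        rw [← mul_sum]; ring
    _ ≤ R * ∑ e ∈ E, c e ^ 2 := by
        rw [mul_sum]
        exact sum_le_sum fun e he =>
          (mul_le_mul_of_nonneg_left (hR e he) (sq_nonneg _)).trans_eq (mul_comm _ _)

lemma sum_sq_expect_mul_le (hR0 : 0 ≤ R)
    (hR : ∀ e ∈ E, ∑ e' ∈ E, |𝔼 a ∈ Ω, x e a * x e' a| ≤ R) (ξ : α → ℝ) :
    ∑ e ∈ E, (𝔼 a ∈ Ω, ξ a * x e a) ^ 2 ≤ R * 𝔼 a ∈ Ω, ξ a ^ 2 := by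
  set c : ι → ℝ := fun e => 𝔼 a ∈ Ω, ξ a * x e a
  have hξ0 : 0 ≤ 𝔼 a ∈ Ω, ξ a ^ 2 := expect_nonneg fun _ _ => sq_nonneg _
  have hQ : ∑ e ∈ E, c e ^ 2 = 𝔼 a ∈ Ω, ξ a * ∑ e ∈ E, c e * x e a := by
    simp only [mul_sum, mul_left_comm (ξ _), expect_sum_comm, ← mul_expect, sq, c]
  have hCS : (∑ e ∈ E, c e ^ 2) ^ 2 ≤ (R * 𝔼 a ∈ Ω, ξ a ^ 2) * ∑ e ∈ E, c e ^ 2 :=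
    calc (∑ e ∈ E, c e ^ 2) ^ 2
        ≤ (𝔼 a ∈ Ω, ξ a ^ 2) * 𝔼 a ∈ Ω, (∑ e ∈ E, c e * x e a) ^ 2 :=
          hQ ▸ expect_mul_sq_le_sq_mul_sq Ω ξ _
      _ ≤ (𝔼 a ∈ Ω, ξ a ^ 2) * (R * ∑ e ∈ E, c e ^ 2) :=
          mul_le_mul_of_nonneg_left (expect_sq_sum_mul_le hR c) hξ0
      _ = _ := by ring
  rcases (sum_nonneg fun e _ => sq_nonneg (c e) : 0 ≤ ∑ e ∈ E, c e ^ 2).eq_or_lt with h0 | h0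
  · rw [← h0]; positivity
  · exact le_of_mul_le_mul_right (by rwa [← sq]) h0

lemma sum_sq_norm_expect_mul_le (hR0 : 0 ≤ R)
    (hR : ∀ e ∈ E, ∑ e' ∈ E, |𝔼 a ∈ Ω, x e a * x e' a| ≤ R) (ξ : α → ℂ) :
    ∑ e ∈ E, ‖𝔼 a ∈ Ω, ξ a * x e a‖ ^ 2 ≤ R * 𝔼 a ∈ Ω, ‖ξ a‖ ^ 2 := by
  simp only [← Complex.normSq_eq_norm_sq, Complex.normSq_apply, ← sq, Complex.re_expect,
    Complex.im_expect, Complex.re_mul_ofReal, Complex.im_mul_ofReal, sum_add_distrib,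
    expect_add_distrib, mul_add]
  exact add_le_add (sum_sq_expect_mul_le hR0 hR _) (sum_sq_expect_mul_le hR0 hR _)

end Bessel

/-! ### The characteristic function of a sum over a random subset -/

/-- The characteristic function at `θ` of `∑ e ∈ G, x e a`, where `a` is uniform in `Ω`. -/
def subsetSumChar {α ι : Type*} (Ω : Finset α) (x : ι → α → ℝ) (θ : ℝ) (G : Finset ι) : ℂ :=
  𝔼 a ∈ Ω, Complex.exp ((θ * ∑ e ∈ G, x e a : ℝ) * Complex.I)

section Gradient

variable {α ι : Type*} {Ω : Finset α} {E : Finset ι} {x : ι → α → ℝ} {R θ : ℝ}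

lemma norm_exp_ofReal_mul_I_sub_one_sub_le {h : ℝ} (hh : |h| ≤ 1) :
    ‖Complex.exp (h * Complex.I) - 1 - h * Complex.I‖ ≤ h ^ 2 := by
  have hn : ‖(h : ℂ) * Complex.I‖ = |h| := by simp
  simpa [hn] using Complex.norm_exp_sub_one_sub_id_le (hn.trans_le hh)

lemma norm_expect_le_of_forall_le {f : α → ℂ} {C : ℝ} (hC : 0 ≤ C) (h : ∀ a ∈ Ω, ‖f a‖ ≤ C) :
    ‖𝔼 a ∈ Ω, f a‖ ≤ C := by
  rcases Ω.eq_empty_or_nonempty with rfl | hΩ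
  · simpa using hC
  · exact (RCLike.norm_expect_le (K := ℝ)).trans (expect_le hΩ h)

variable [DecidableEq ι]

lemma norm_discreteDeriv_subsetSumChar_sub_le (hx : ∀ e ∈ E, ∀ a ∈ Ω, |x e a| ≤ 1) (hθ : |θ| ≤ 1)
    {e : ι} (he : e ∈ E) (G : Finset ι) :
    ‖discreteDeriv (subsetSumChar Ω x θ) e G -
      𝔼 a ∈ Ω, θ * Complex.I * Complex.exp ((θ * ∑ e ∈ G, x e a : ℝ) * Complex.I) * x e a‖ ≤
      θ ^ 2 := by
  unfold discreteDeriv subsetSumChar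
  rw [← expect_sub_distrib, ← expect_sub_distrib]
  refine norm_expect_le_of_forall_le (sq_nonneg θ) fun a ha => ?_
  have hθx : |θ * x e a| ≤ |θ| := by
    rw [abs_mul]; exact mul_le_of_le_one_right (abs_nonneg _) (hx e he a ha)
  have hbound : ∀ u h : ℝ, |h| ≤ |θ| →
      ‖Complex.exp (u * Complex.I) * (Complex.exp (h * Complex.I) - 1 - h * Complex.I)‖ ≤
        θ ^ 2 := fun u h hh => by
    rw [norm_mul, Complex.norm_exp_ofReal_mul_I, one_mul]
    exact (norm_exp_ofReal_mul_I_sub_one_sub_le (hh.trans hθ)).trans (sq_le_sq.2 hh)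
  by_cases h : e ∈ G
  · rw [insert_eq_self.2 h, sum_erase_eq_sub h, mul_sub, sub_eq_add_neg _ (θ * x e a), ← norm_neg]
    refine le_of_eq_of_le (congrArg _ ?_)
      (hbound (θ * ∑ e ∈ G, x e a) (-(θ * x e a)) (by rwa [abs_neg]))
    push_cast
    rw [add_mul, Complex.exp_add]
    ring
  · rw [erase_eq_of_notMem h, sum_insert h, mul_add, add_comm]
    refine le_of_eq_of_le (congrArg _ ?_) (hbound (θ * ∑ e ∈ G, x e a) (θ * x e a) hθx)
    push_cast
    rw [add_mul, Complex.exp_add]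
    ring

lemma sum_sq_norm_discreteDeriv_subsetSumChar_le (hx : ∀ e ∈ E, ∀ a ∈ Ω, |x e a| ≤ 1)
    (hR0 : 0 ≤ R) (hR : ∀ e ∈ E, ∑ e' ∈ E, |𝔼 a ∈ Ω, x e a * x e' a| ≤ R) (hθ : |θ| ≤ 1)
    (G : Finset ι) :
    ∑ e ∈ E, ‖discreteDeriv (subsetSumChar Ω x θ) e G‖ ^ 2 ≤
      2 * R * θ ^ 2 + 2 * #E * θ ^ 4 := by
  set ξ : α → ℂ := fun a => θ * Complex.I * Complex.exp ((θ * ∑ e ∈ G, x e a : ℝ) * Complex.I)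
  have hξ : ∀ a ∈ Ω, ‖ξ a‖ ^ 2 ≤ θ ^ 2 := fun a _ => by
    rw [norm_mul, Complex.norm_exp_ofReal_mul_I]; simp
  have hbessel : ∑ e ∈ E, ‖𝔼 a ∈ Ω, ξ a * x e a‖ ^ 2 ≤ R * θ ^ 2 := by
    refine (sum_sq_norm_expect_mul_le hR0 hR ξ).trans (mul_le_mul_of_nonneg_left ?_ hR0)
    rcases Ω.eq_empty_or_nonempty with rfl | hΩ
    · simpa using sq_nonneg θ
    · exact expect_le hΩ hξ
  calc ∑ e ∈ E, ‖discreteDeriv (subsetSumChar Ω x θ) e G‖ ^ 2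
      ≤ ∑ e ∈ E, (2 * ‖𝔼 a ∈ Ω, ξ a * x e a‖ ^ 2 + 2 * θ ^ 4) := by
        refine sum_le_sum fun e he => ?_
        have htri := (norm_le_norm_add_norm_sub' _ _).trans
          (add_le_add_right (norm_discreteDeriv_subsetSumChar_sub_le hx hθ he G) _)
        refine (pow_le_pow_left₀ (norm_nonneg _) htri 2).trans ?_
        linarith [add_sq_le (a := ‖𝔼 a ∈ Ω, ξ a * x e a‖) (b := θ ^ 2)]
    _ ≤ 2 * R * θ ^ 2 + 2 * #E * θ ^ 4 := by
        rw [sum_add_distrib, ← mul_sum, sum_const, nsmul_eq_mul]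
        linarith

end Gradient

section ComplexConcentration

variable {ι : Type*} [DecidableEq ι] {E : Finset ι} {p V : ℝ}

lemma bernoulliExpect_exp_mul_sub_le (hp : p ∈ Set.Icc 0 1) {f : Finset ι → ℝ}
    (hV : ∀ G ⊆ E, ∑ e ∈ E, discreteDeriv f e G ^ 2 ≤ V) {t : ℝ} (ht : t ^ 2 * V ≤ 1) :
    bernoulliExpect p E (fun G => Real.exp (t * (f G - bernoulliExpect p E f))) ≤ Real.exp 1 := by
  refine (bernoulliExpect_exp_le hp ?_ (fun G hG => ?_) ht).trans (Real.exp_le_exp.2 ht)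
  · simp only [bernoulliExpect_const_mul, sub_eq_add_neg, bernoulliExpect_add,
      bernoulliExpect_const, add_neg_cancel, mul_zero]
  · simp only [discreteDeriv_const_mul, mul_pow, ← mul_sum]
    refine mul_le_mul_of_nonneg_left ?_ (sq_nonneg t)
    simpa only [discreteDeriv, sub_sub_sub_cancel_right] using hV G hG

lemma exp_mul_norm_le {L : ℝ} (hL : 0 ≤ L) (z : ℂ) :
    Real.exp (L * ‖z‖) ≤
      (Real.exp (2 * L * z.re) + Real.exp (-(2 * L) * z.re) +
        (Real.exp (2 * L * z.im) + Real.exp (-(2 * L) * z.im))) / 2 := by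
  have habs : ∀ u : ℝ, Real.exp (L * |u|) ^ 2 ≤ Real.exp (2 * L * u) + Real.exp (-(2 * L) * u) :=
    fun u => by
      rw [← Real.exp_nat_mul]
      rcases abs_choice u with h | h <;> rw [h]
      · exact le_of_eq_of_le (by push_cast; ring_nf) (le_add_of_nonneg_right (Real.exp_pos _).le)
      · exact le_of_eq_of_le (by push_cast; ring_nf) (le_add_of_nonneg_left (Real.exp_pos _).le)
  calc Real.exp (L * ‖z‖) ≤ Real.exp (L * |z.re|) * Real.exp (L * |z.im|) := by
        rw [← Real.exp_add, ← mul_add]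
        exact Real.exp_le_exp.2 (mul_le_mul_of_nonneg_left (Complex.norm_le_abs_re_add_abs_im z) hL)
    _ ≤ (Real.exp (L * |z.re|) ^ 2 + Real.exp (L * |z.im|) ^ 2) / 2 := by
        linarith [two_mul_le_add_sq (Real.exp (L * |z.re|)) (Real.exp (L * |z.im|))]
    _ ≤ _ := by linarith [habs z.re, habs z.im]

lemma bernoulliExpect_exp_mul_norm_sub_le (hp : p ∈ Set.Icc 0 1) {f : Finset ι → ℂ}
    (hV : ∀ G ⊆ E, ∑ e ∈ E, ‖discreteDeriv f e G‖ ^ 2 ≤ V) {L : ℝ} (hL : 0 ≤ L)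
    (hLV : (2 * L) ^ 2 * V ≤ 1) :
    bernoulliExpect p E (fun G => Real.exp (L * ‖f G - bernoulliExpect p E f‖)) ≤
      2 * Real.exp 1 := by
  have hre : ∀ G ⊆ E, ∑ e ∈ E, discreteDeriv (fun G => (f G).re) e G ^ 2 ≤ V := fun G hG =>
    (sum_le_sum fun e _ => sq_le_sq.2 ((Complex.abs_re_le_norm (discreteDeriv f e G)).trans
      (le_abs_self _))).trans (hV G hG)
  have him : ∀ G ⊆ E, ∑ e ∈ E, discreteDeriv (fun G => (f G).im) e G ^ 2 ≤ V := fun G hG =>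
    (sum_le_sum fun e _ => sq_le_sq.2 ((Complex.abs_im_le_norm (discreteDeriv f e G)).trans
      (le_abs_self _))).trans (hV G hG)
  have hLV' : (-(2 * L)) ^ 2 * V ≤ 1 := by rwa [neg_sq]
  refine (bernoulliExpect_mono hp fun G _ => exp_mul_norm_le hL _).trans ?_
  simp only [div_eq_inv_mul, bernoulliExpect_const_mul, bernoulliExpect_add, Complex.sub_re,
    Complex.sub_im]
  have hEre : (bernoulliExpect p E f).re = bernoulliExpect p E (fun G => (f G).re) :=
    map_bernoulliExpect Complex.reLm f
  have hEim : (bernoulliExpect p E f).im = bernoulliExpect p E (fun G => (f G).im) :=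
    map_bernoulliExpect Complex.imLm f
  rw [hEre, hEim]
  linarith [bernoulliExpect_exp_mul_sub_le hp hre hLV, bernoulliExpect_exp_mul_sub_le hp hre hLV',
    bernoulliExpect_exp_mul_sub_le hp him hLV, bernoulliExpect_exp_mul_sub_le hp him hLV']

end ComplexConcentration

/-! ### The Bernoulli characteristic function -/

/-- The characteristic function at `u` of the Bernoulli distribution with parameter `p`. -/
def bernoulliChar (p u : ℝ) : ℂ := p * Complex.exp (u * Complex.I) + (1 - p)

section BernoulliChar

variable {p u : ℝ}

lemma norm_bernoulliChar_sq (p u : ℝ) :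
    ‖bernoulliChar p u‖ ^ 2 = 1 - 2 * (p * (1 - p)) * (1 - Real.cos u) := by
  have hre : (bernoulliChar p u).re = p * Real.cos u + (1 - p) := by
    simp [bernoulliChar, Complex.exp_ofReal_mul_I_re, Complex.exp_ofReal_mul_I_im]
  have him : (bernoulliChar p u).im = p * Real.sin u := by
    simp [bernoulliChar, Complex.exp_ofReal_mul_I_re, Complex.exp_ofReal_mul_I_im]
  rw [← Complex.normSq_eq_norm_sq, Complex.normSq_apply, hre, him]
  linear_combination p ^ 2 * Real.sin_sq_add_cos_sq u

lemma norm_bernoulliChar_le_one (hp : p ∈ Set.Icc 0 1) (u : ℝ) : ‖bernoulliChar p u‖ ≤ 1 := by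
  rw [← sq_le_one_iff₀ (norm_nonneg _), norm_bernoulliChar_sq]
  have hpq : 0 ≤ p * (1 - p) := mul_nonneg hp.1 (sub_nonneg.2 hp.2)
  linarith [mul_nonneg hpq (sub_nonneg.2 (Real.cos_le_one u))]

lemma norm_bernoulliChar_le_exp (hp : p ∈ Set.Icc 0 1) (hu : |u| ≤ Real.pi) :
    ‖bernoulliChar p u‖ ≤ Real.exp (-(2 * (p * (1 - p)) / Real.pi ^ 2 * u ^ 2)) := by
  have hpq : 0 ≤ p * (1 - p) := mul_nonneg hp.1 (sub_nonneg.2 hp.2)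
  refine (sq_le_sq₀ (norm_nonneg _) (Real.exp_pos _).le).1 ?_
  rw [norm_bernoulliChar_sq, ← Real.exp_nat_mul]
  have hcos := mul_le_mul_of_nonneg_left (Real.cos_le_one_sub_mul_cos_sq hu) hpq
  refine le_trans ?_ (Real.add_one_le_exp _)
  push_cast
  linear_combination 2 * hcos

lemma norm_exp_ofReal_mul_I_sub_taylor_two_le {y : ℝ} (hy : |y| ≤ 1) :
    ‖Complex.exp (y * Complex.I) - (1 + y * Complex.I - y ^ 2 / 2)‖ ≤ 2 / 9 * |y| ^ 3 := by
  have hn : ‖(y : ℂ) * Complex.I‖ = |y| := by simp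
  have h := Complex.exp_bound (x := (y : ℂ) * Complex.I) (hn.trans_le hy)
    (show 0 < 3 by norm_num)
  have hsum : ∑ m ∈ range 3, ((y : ℂ) * Complex.I) ^ m / (m.factorial : ℂ) =
      1 + y * Complex.I - y ^ 2 / 2 := by
    simp [sum_range_succ, mul_pow]; ring
  rw [hn, hsum] at h
  refine h.trans_eq ?_
  norm_num [Nat.factorial, mul_comm]

lemma abs_one_sub_sub_exp_neg_le {y : ℝ} (hy0 : 0 ≤ y) (hy1 : y ≤ 1) :
    |1 - y - Real.exp (-y)| ≤ y ^ 2 := by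
  have h := Real.abs_exp_sub_one_sub_id_le (x := -y) (by rwa [abs_neg, abs_of_nonneg hy0])
  rwa [neg_sq, abs_sub_comm, show -y - (Real.exp (-y) - 1) = 1 - y - Real.exp (-y) by ring] at h

lemma abs_one_sub_sub_exp_neg_variance_le (hp : p ∈ Set.Icc 0 1) (hu : |u| ≤ 1) :
    |1 - p * (1 - p) * u ^ 2 / 2 - Real.exp (-(p * (1 - p) * u ^ 2 / 2))| ≤ |u| ^ 3 / 64 := by
  have hu2 : u ^ 2 ≤ 1 := (sq_le_one_iff_abs_le_one u).2 hu
  have hpq : 0 ≤ p * (1 - p) := mul_nonneg hp.1 (sub_nonneg.2 hp.2)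
  set y := p * (1 - p) * u ^ 2 / 2 with hy
  have hy0 : 0 ≤ y := by positivity
  have hyu : y ≤ u ^ 2 / 8 := by rw [hy]; nlinarith [sq_nonneg (p - 1 / 2), sq_nonneg u]
  calc |1 - y - Real.exp (-y)| ≤ y ^ 2 := abs_one_sub_sub_exp_neg_le hy0 (by linarith)
    _ ≤ (u ^ 2 / 8) ^ 2 := by gcongr
    _ = |u| ^ 4 / 64 := by rw [← sq_abs u]; ring
    _ ≤ |u| ^ 3 / 64 := by
      gcongr ?_ / 64
      exact pow_le_pow_of_le_one (abs_nonneg u) hu (by norm_num)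

-- Centring cancels the linear term, so that the quadratic terms combine to `-p * (1 - p) * u²/2`.
lemma norm_bernoulliChar_mul_exp_sub_le (hp : p ∈ Set.Icc 0 1) (hu : |u| ≤ 1) :
    ‖bernoulliChar p u * Complex.exp ((-(p * u) : ℝ) * Complex.I) -
      (Real.exp (-(p * (1 - p) * u ^ 2 / 2)) : ℝ)‖ ≤ |u| ^ 3 := by
  obtain ⟨hp0, hp1⟩ := hp
  have hq0 : 0 ≤ 1 - p := sub_nonneg.2 hp1
  set y := p * (1 - p) * u ^ 2 / 2 with hy
  set T : ℝ → ℂ := fun v => Complex.exp (v * Complex.I) - (1 + v * Complex.I - v ^ 2 / 2)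
  have hT : ∀ c ∈ Set.Icc (0 : ℝ) 1, ‖T (c * u)‖ ≤ 2 / 9 * |u| ^ 3 ∧
      ‖T (-(c * u))‖ ≤ 2 / 9 * |u| ^ 3 := fun c hc => by
    have hcu : |c * u| ≤ |u| := by
      rw [abs_mul, abs_of_nonneg hc.1]; exact mul_le_of_le_one_left (abs_nonneg _) hc.2
    have hcu3 : 2 / 9 * |c * u| ^ 3 ≤ 2 / 9 * |u| ^ 3 := by gcongr
    refine ⟨(norm_exp_ofReal_mul_I_sub_taylor_two_le (hcu.trans hu)).trans hcu3, ?_⟩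
    rw [← abs_neg] at hcu hcu3
    exact (norm_exp_ofReal_mul_I_sub_taylor_two_le (hcu.trans hu)).trans hcu3
  have hgauss : ‖((1 - y - Real.exp (-y) : ℝ) : ℂ)‖ ≤ |u| ^ 3 / 64 := by
    rw [Complex.norm_real, Real.norm_eq_abs]
    exact abs_one_sub_sub_exp_neg_variance_le ⟨hp0, hp1⟩ hu
  have hexpand : bernoulliChar p u * Complex.exp ((-(p * u) : ℝ) * Complex.I) -
      (Real.exp (-y) : ℝ) =
        p * T ((1 - p) * u) + (1 - p : ℝ) * T (-(p * u)) + (1 - y - Real.exp (-y) : ℝ) := by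
    have hmul : Complex.exp (u * Complex.I) * Complex.exp ((-(p * u) : ℝ) * Complex.I) =
        Complex.exp (((1 - p) * u : ℝ) * Complex.I) := by
      rw [← Complex.exp_add]; congr 1; push_cast; ring
    rw [bernoulliChar, add_mul, mul_assoc, hmul, hy]
    simp only [T]
    push_cast
    ring
  rw [hexpand]
  refine norm_add₃_le.trans ?_
  rw [norm_mul, norm_mul, Complex.norm_of_nonneg hp0, Complex.norm_of_nonneg hq0]
  nlinarith [mul_le_mul_of_nonneg_left (hT (1 - p) ⟨hq0, by linarith⟩).1 hp0,
    mul_le_mul_of_nonneg_left (hT p ⟨hp0, hp1⟩).2 hq0, pow_nonneg (abs_nonneg u) 3]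

lemma norm_prod_sub_prod_le {ι : Type*} (s : Finset ι) (a b : ι → ℂ) (ha : ∀ i ∈ s, ‖a i‖ ≤ 1)
    (hb : ∀ i ∈ s, ‖b i‖ ≤ 1) : ‖∏ i ∈ s, a i - ∏ i ∈ s, b i‖ ≤ ∑ i ∈ s, ‖a i - b i‖ := by
  classical
  induction s using Finset.induction_on with
  | empty => simp
  | insert j s hj ih =>
    simp only [forall_mem_insert] at ha hb
    rw [prod_insert hj, prod_insert hj, sum_insert hj,
      show a j * ∏ i ∈ s, a i - b j * ∏ i ∈ s, b i =
        (a j - b j) * ∏ i ∈ s, a i + b j * (∏ i ∈ s, a i - ∏ i ∈ s, b i) by ring]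
    refine (norm_add_le _ _).trans ?_
    rw [norm_mul, norm_mul]
    have hprod : ‖∏ i ∈ s, a i‖ ≤ 1 := by
      rw [norm_prod]
      exact prod_le_one (fun _ _ => norm_nonneg _) ha.2
    exact add_le_add (mul_le_of_le_one_right (norm_nonneg _) hprod)
      ((mul_le_of_le_one_left (norm_nonneg _) hb.1).trans (ih ha.2 hb.2))

end BernoulliChar

section Moments

variable {α ι : Type*} {Ω : Finset α} {E : Finset ι} {x : ι → α → ℝ} {p θ v : ℝ}

lemma exp_ofReal_sum_mul_I (G : Finset ι) (y : ι → ℝ) :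
    Complex.exp ((∑ e ∈ G, y e : ℝ) * Complex.I) =
      ∏ e ∈ G, Complex.exp ((y e : ℝ) * Complex.I) := by
  rw [Complex.ofReal_sum, sum_mul, Complex.exp_sum]

lemma norm_prod_bernoulliChar_sub_le (hp : p ∈ Set.Icc 0 1) {y : ι → ℝ}
    (hy : ∀ e ∈ E, |y e| ≤ 1) (hsum : ∑ e ∈ E, y e = 0) :
    ‖∏ e ∈ E, bernoulliChar p (y e) - (Real.exp (-(p * (1 - p) * (∑ e ∈ E, y e ^ 2) / 2)) : ℝ)‖ ≤
      ∑ e ∈ E, |y e| ^ 3 := by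
  have hcentre : ∏ e ∈ E, bernoulliChar p (y e) =
      ∏ e ∈ E, bernoulliChar p (y e) * Complex.exp ((-(p * y e) : ℝ) * Complex.I) := by
    rw [prod_mul_distrib, ← exp_ofReal_sum_mul_I, sum_neg_distrib, ← mul_sum, hsum]
    simp
  have hgauss : ((Real.exp (-(p * (1 - p) * (∑ e ∈ E, y e ^ 2) / 2)) : ℝ) : ℂ) =
      ∏ e ∈ E, ((Real.exp (-(p * (1 - p) * y e ^ 2 / 2)) : ℝ) : ℂ) := by
    rw [← Complex.ofReal_prod, ← Real.exp_sum, sum_neg_distrib, ← sum_div, ← mul_sum]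
  rw [hcentre, hgauss]
  refine (norm_prod_sub_prod_le _ _ _ (fun e _ => ?_) (fun e _ => ?_)).trans
    (sum_le_sum fun e he => norm_bernoulliChar_mul_exp_sub_le hp (hy e he))
  · rw [norm_mul, Complex.norm_exp_ofReal_mul_I, mul_one]
    exact norm_bernoulliChar_le_one hp _
  · have hpq : 0 ≤ p * (1 - p) := mul_nonneg hp.1 (sub_nonneg.2 hp.2)
    rw [Complex.norm_of_nonneg (Real.exp_pos _).le, Real.exp_le_one_iff, neg_nonpos]
    positivity

lemma norm_prod_bernoulliChar_le (hp : p ∈ Set.Icc 0 1) {y : ι → ℝ}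
    (hy : ∀ e ∈ E, |y e| ≤ Real.pi) :
    ‖∏ e ∈ E, bernoulliChar p (y e)‖ ≤
      Real.exp (-(2 * (p * (1 - p)) / Real.pi ^ 2 * ∑ e ∈ E, y e ^ 2)) := by
  rw [norm_prod, mul_sum, ← sum_neg_distrib, Real.exp_sum]
  exact prod_le_prod (fun _ _ => norm_nonneg _) fun e he => norm_bernoulliChar_le_exp hp (hy e he)

lemma sq_norm_subsetSumChar (G : Finset ι) :
    ((‖subsetSumChar Ω x θ G‖ ^ 2 : ℝ) : ℂ) =
      subsetSumChar (Ω ×ˢ Ω) (fun e ab => x e ab.1 - x e ab.2) θ G := by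
  have hconj : (starRingEnd ℂ) (subsetSumChar Ω x θ G) =
      𝔼 b ∈ Ω, Complex.exp ((-(θ * ∑ e ∈ G, x e b) : ℝ) * Complex.I) := by
    refine (map_expect (starRingEnd ℂ) _ _).trans (expect_congr rfl fun b _ => ?_)
    rw [← Complex.exp_conj, map_mul, Complex.conj_ofReal, Complex.conj_I]
    push_cast
    ring_nf
  rw [← Complex.normSq_eq_norm_sq, ← Complex.mul_conj, hconj]
  unfold subsetSumChar
  rw [expect_mul_expect, expect_product]
  refine expect_congr rfl fun a _ => expect_congr rfl fun b _ => ?_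
  rw [← Complex.exp_add, sum_sub_distrib]
  push_cast
  ring_nf

variable [DecidableEq ι]

lemma bernoulliExpect_subsetSumChar (E : Finset ι) :
    bernoulliExpect p E (subsetSumChar Ω x θ) =
      𝔼 a ∈ Ω, ∏ e ∈ E, bernoulliChar p (θ * x e a) := by
  unfold subsetSumChar bernoulliChar
  simp only [mul_sum, exp_ofReal_sum_mul_I, bernoulliExpect_expect, bernoulliExpect_prod]

lemma norm_bernoulliExpect_subsetSumChar_sub_le (hΩ : Ω.Nonempty) (hp : p ∈ Set.Icc 0 1)
    (hx : ∀ e ∈ E, ∀ a ∈ Ω, |x e a| ≤ 1) (hθ : |θ| ≤ 1) (hsum : ∀ a ∈ Ω, ∑ e ∈ E, x e a = 0)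
    (hsq : ∀ a ∈ Ω, ∑ e ∈ E, x e a ^ 2 = v) :
    ‖bernoulliExpect p E (subsetSumChar Ω x θ) -
      (Real.exp (-(p * (1 - p) * v * θ ^ 2 / 2)) : ℝ)‖ ≤ #E * |θ| ^ 3 := by
  set g : ℂ := ↑(Real.exp (-(p * (1 - p) * v * θ ^ 2 / 2)))
  rw [bernoulliExpect_subsetSumChar, ← expect_const hΩ g, ← expect_sub_distrib]
  refine norm_expect_le_of_forall_le (by positivity) fun a ha => ?_
  have hθx : ∀ e ∈ E, |θ * x e a| ≤ |θ| := fun e he => by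
    rw [abs_mul]; exact mul_le_of_le_one_right (abs_nonneg _) (hx e he a ha)
  have h := norm_prod_bernoulliChar_sub_le hp (y := fun e => θ * x e a)
    (fun e he => (hθx e he).trans hθ) (by rw [← mul_sum, hsum a ha, mul_zero])
  simp only [mul_pow, ← mul_sum, hsq a ha] at h
  refine (le_of_eq_of_le (by simp only [g]; ring_nf) h).trans ?_
  rw [← nsmul_eq_mul]
  exact sum_le_card_nsmul _ _ _ fun e he => pow_le_pow_left₀ (abs_nonneg _) (hθx e he) 3

lemma bernoulliExpect_sq_norm_subsetSumChar_le (hp : p ∈ Set.Icc 0 1)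
    (hx : ∀ e ∈ E, ∀ a ∈ Ω, ∀ b ∈ Ω, |x e a - x e b| ≤ 1) (hθ : |θ| ≤ Real.pi) :
    bernoulliExpect p E (fun G => ‖subsetSumChar Ω x θ G‖ ^ 2) ≤
      𝔼 a ∈ Ω, 𝔼 b ∈ Ω,
        Real.exp (-(2 * (p * (1 - p)) / Real.pi ^ 2 * θ ^ 2 * ∑ e ∈ E, (x e a - x e b) ^ 2)) := by
  have hsq : ((bernoulliExpect p E (fun G => ‖subsetSumChar Ω x θ G‖ ^ 2) : ℝ) : ℂ) =
      𝔼 a ∈ Ω, 𝔼 b ∈ Ω, ∏ e ∈ E, bernoulliChar p (θ * (x e a - x e b)) := by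
    rw [← expect_product' , ← bernoulliExpect_subsetSumChar]
    exact (map_bernoulliExpect Complex.ofRealCLM.toLinearMap _).trans
      (bernoulliExpect_congr fun G _ => sq_norm_subsetSumChar G)
  refine (Complex.re_le_norm ((bernoulliExpect p E _ : ℝ) : ℂ)).trans ?_
  rw [hsq]
  refine (RCLike.norm_expect_le (K := ℝ)).trans (expect_le_expect fun a ha => ?_)
  refine (RCLike.norm_expect_le (K := ℝ)).trans (expect_le_expect fun b hb => ?_)
  refine (norm_prod_bernoulliChar_le hp fun e he => ?_).trans_eq ?_
  · rw [abs_mul]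
    exact (mul_le_of_le_one_right (abs_nonneg _) (hx e he a ha b hb)).trans hθ
  · simp only [mul_pow, ← mul_sum, mul_assoc]

end Moments

/-! ### Edges inside a random `k`-set -/

section KSets

variable {n k : ℕ}

lemma mem_completeEdges {e : Sym2 (Fin n)} : e ∈ completeEdges n ↔ ¬ e.IsDiag := by
  simp [completeEdges]

lemma card_filter_toFinset_subset (S : Finset (Fin n)) :
    #{e ∈ completeEdges n | e.toFinset ⊆ S} = (#S).choose 2 := by
  rw [← Sym2.card_image_offDiag]
  congr 1
  ext e
  induction e using Sym2.inductionOn with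
  | hf a b =>
    simp only [mem_filter, mem_completeEdges, Sym2.mk_isDiag_iff, Sym2.toFinset_mk_eq,
      insert_subset_iff, singleton_subset_iff, mem_image, mem_offDiag, Prod.exists]
    constructor
    · rintro ⟨hne, ha, hb⟩
      exact ⟨a, b, ⟨ha, hb, hne⟩, rfl⟩
    · rintro ⟨c, d, ⟨hc, hd, hne⟩, h⟩
      rcases Sym2.eq_iff.1 h with ⟨rfl, rfl⟩ | ⟨rfl, rfl⟩
      · exact ⟨hne, hc, hd⟩
      · exact ⟨hne.symm, hd, hc⟩

lemma card_completeEdges (n : ℕ) : #(completeEdges n) = n.choose 2 := by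
  simpa using card_filter_toFinset_subset (univ : Finset (Fin n))

lemma cast_choose_two (k : ℕ) : (k.choose 2 : ℝ) = Kr k := by
  rw [Nat.cast_choose_two, Kr]

lemma cast_card_completeEdges (n : ℕ) : (#(completeEdges n) : ℝ) = Nr n := by
  rw [card_completeEdges, cast_choose_two, Kr, Nr]

lemma Kr_nonneg (k : ℕ) : 0 ≤ Kr k := by
  rw [← cast_choose_two]
  positivity

lemma Nr_nonneg (n : ℕ) : 0 ≤ Nr n := Kr_nonneg n

lemma Nr_pos (hn : 2 ≤ n) : 0 < Nr n := by
  rw [← cast_card_completeEdges, card_completeEdges]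
  exact_mod_cast Nat.choose_pos hn

lemma Kr_le_Nr (hk : k ≤ n) : Kr k ≤ Nr n := by
  rw [← cast_choose_two, ← cast_card_completeEdges, card_completeEdges]
  exact_mod_cast Nat.choose_le_choose 2 hk

lemma mem_kSets {S : Finset (Fin n)} : S ∈ kSets n k ↔ #S = k := by
  simp [kSets]

lemma card_kSets (n k : ℕ) : #(kSets n k) = n.choose k := by
  simp [kSets]

lemma kSets_nonempty (hk : k ≤ n) : (kSets n k).Nonempty := by
  rw [← card_pos, card_kSets]
  exact Nat.choose_pos hk

/-- The indicator that both ends of the edge `e` lie in `S`, minus its mean `K / N` over uniformly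
random `k`-sets `S`. -/
def edgeDev (n k : ℕ) (e : Sym2 (Fin n)) (S : Finset (Fin n)) : ℝ :=
  (if e.toFinset ⊆ S then 1 else 0) - Kr k / Nr n

lemma abs_edgeDev_le_one (hk : k ≤ n) (e : Sym2 (Fin n)) (S : Finset (Fin n)) :
    |edgeDev n k e S| ≤ 1 := by
  have h0 : 0 ≤ Kr k / Nr n := div_nonneg (Kr_nonneg k) (Nr_nonneg n)
  have h1 : Kr k / Nr n ≤ 1 := div_le_one_of_le₀ (Kr_le_Nr hk) (Nr_nonneg n)
  rw [edgeDev, abs_le]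
  split_ifs <;> constructor <;> linarith

lemma abs_edgeDev_sub_edgeDev_le_one (e : Sym2 (Fin n)) (S T : Finset (Fin n)) :
    |edgeDev n k e S - edgeDev n k e T| ≤ 1 := by
  simp only [edgeDev, sub_sub_sub_cancel_right]
  split_ifs <;> norm_num

lemma sum_ite_toFinset_subset {S : Finset (Fin n)} (hS : S ∈ kSets n k) :
    ∑ e ∈ completeEdges n, (if e.toFinset ⊆ S then (1 : ℝ) else 0) = Kr k := by
  rw [sum_boole, card_filter_toFinset_subset, mem_kSets.1 hS, cast_choose_two]

lemma sum_edgeDev (hn : 2 ≤ n) {S : Finset (Fin n)} (hS : S ∈ kSets n k) :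
    ∑ e ∈ completeEdges n, edgeDev n k e S = 0 := by
  simp only [edgeDev]
  rw [sum_sub_distrib, sum_ite_toFinset_subset hS, sum_const, nsmul_eq_mul,
    cast_card_completeEdges, mul_div_cancel₀ _ (Nr_pos hn).ne', sub_self]

lemma sum_edgeDev_sq (hn : 2 ≤ n) {S : Finset (Fin n)} (hS : S ∈ kSets n k) :
    ∑ e ∈ completeEdges n, edgeDev n k e S ^ 2 = Kr k * (1 - Kr k / Nr n) := by
  have hsq (e : Sym2 (Fin n)) : edgeDev n k e S ^ 2 =
      (1 - 2 * (Kr k / Nr n)) * (if e.toFinset ⊆ S then (1 : ℝ) else 0) + (Kr k / Nr n) ^ 2 := by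
    rw [edgeDev]
    split_ifs <;> ring
  have := (Nr_pos hn).ne'
  simp only [hsq]
  rw [sum_add_distrib, ← mul_sum, sum_ite_toFinset_subset hS, sum_const, nsmul_eq_mul,
    cast_card_completeEdges]
  field

lemma expect_ite_subset {A : Finset (Fin n)} (hA : #A ≤ k) :
    𝔼 S ∈ kSets n k, (if A ⊆ S then (1 : ℝ) else 0) =
      (n - #A).choose (k - #A) / n.choose k := by
  rw [expect_eq_sum_div_card, sum_boole, card_kSets, kSets,
    card_filter_powersetCard_subset _ _ _ (subset_univ A) hA]
  simp

lemma expect_edgeDev_mul_edgeDev_of_disjoint (hk4 : 4 ≤ k) (hk : k ≤ n) {e e' : Sym2 (Fin n)}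
    (he : ¬ e.IsDiag) (he' : ¬ e'.IsDiag) (hdisj : Disjoint e.toFinset e'.toFinset) :
    𝔼 S ∈ kSets n k, edgeDev n k e S * edgeDev n k e' S =
      (n - 4).choose (k - 4) / n.choose k
        - 2 * (Kr k / Nr n) * ((n - 2).choose (k - 2) / n.choose k) + (Kr k / Nr n) ^ 2 := by
  have hcard := Sym2.card_toFinset_of_not_isDiag e he
  have hcard' := Sym2.card_toFinset_of_not_isDiag e' he'
  have hunion : #(e.toFinset ∪ e'.toFinset) = 4 := by
    rw [card_union_of_disjoint hdisj, hcard, hcard']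
  have hmul (S : Finset (Fin n)) : edgeDev n k e S * edgeDev n k e' S =
      (if e.toFinset ∪ e'.toFinset ⊆ S then 1 else 0)
        - Kr k / Nr n * (if e.toFinset ⊆ S then 1 else 0)
        - Kr k / Nr n * (if e'.toFinset ⊆ S then 1 else 0) + (Kr k / Nr n) ^ 2 := by
    simp only [edgeDev, union_subset_iff, ite_and]
    split_ifs <;> ring
  simp only [hmul]
  rw [expect_add_distrib, expect_sub_distrib, expect_sub_distrib, ← mul_expect, ← mul_expect,
    expect_const (kSets_nonempty hk), expect_ite_subset (by omega), expect_ite_subset (by omega),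
    expect_ite_subset (by omega), hunion, hcard, hcard']
  ring

lemma card_filter_not_disjoint_le (e : Sym2 (Fin n)) :
    #{e' ∈ completeEdges n | ¬ Disjoint e.toFinset e'.toFinset} ≤ 2 * n := by
  have hsub : {e' ∈ completeEdges n | ¬ Disjoint e.toFinset e'.toFinset} ⊆
      e.toFinset.biUnion fun u => univ.image fun w => s(u, w) := by
    intro e' he'
    obtain ⟨u, hu, hu'⟩ := not_disjoint_iff.1 (mem_filter.1 he').2
    obtain ⟨w, rfl⟩ := Sym2.mem_iff_exists.1 (Sym2.mem_toFinset.1 hu')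
    simp only [mem_biUnion, mem_image, mem_univ, true_and]
    exact ⟨u, hu, w, rfl⟩
  calc _ ≤ #(e.toFinset.biUnion fun u => univ.image fun w => s(u, w)) := card_le_card hsub
    _ ≤ #e.toFinset * n := card_biUnion_le_card_mul _ _ _ fun u _ => card_image_le.trans (by simp)
    _ ≤ 2 * n := by
      gcongr
      rw [Sym2.card_toFinset]
      split_ifs <;> norm_num

/- The covariances with edges disjoint from `e` all coincide and the rows of the covariance matrix
sum to zero, so these covariances contribute no more than those with the at most `2n` edges that
meet `e`. -/
lemma sum_abs_expect_edgeDev_mul_edgeDev_le (hk4 : 4 ≤ k) (hk : k ≤ n) {e : Sym2 (Fin n)}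
    (he : e ∈ completeEdges n) :
    ∑ e' ∈ completeEdges n, |𝔼 S ∈ kSets n k, edgeDev n k e S * edgeDev n k e' S| ≤ 4 * n := by
  set cov : Sym2 (Fin n) → ℝ := fun e' => 𝔼 S ∈ kSets n k, edgeDev n k e S * edgeDev n k e' S
  set far := {e' ∈ completeEdges n | Disjoint e.toFinset e'.toFinset}
  set near := {e' ∈ completeEdges n | ¬ Disjoint e.toFinset e'.toFinset}
  have hle (e' : Sym2 (Fin n)) : |cov e'| ≤ 1 :=
    (abs_expect_le _ _).trans <| expect_le (kSets_nonempty hk) fun S _ => by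
      rw [abs_mul]
      exact mul_le_one₀ (abs_edgeDev_le_one hk _ _) (abs_nonneg _) (abs_edgeDev_le_one hk _ _)
  have hrow : ∑ e' ∈ completeEdges n, cov e' = 0 := by
    rw [← expect_sum_comm]
    refine expect_eq_zero fun S hS => ?_
    rw [← mul_sum, sum_edgeDev (by omega) hS, mul_zero]
  obtain ⟨c, hc⟩ : ∃ c, ∀ e' ∈ far, cov e' = c :=
    ⟨_, fun e' he' => expect_edgeDev_mul_edgeDev_of_disjoint hk4 hk (mem_completeEdges.1 he)
      (mem_completeEdges.1 (mem_filter.1 he').1) (mem_filter.1 he').2⟩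
  have hnear : ∑ e' ∈ near, |cov e'| ≤ 2 * n := by
    refine (sum_le_card_nsmul _ _ 1 fun e' _ => hle e').trans ?_
    rw [nsmul_one]
    exact_mod_cast card_filter_not_disjoint_le e
  have hfar : ∑ e' ∈ far, |cov e'| ≤ 2 * n := by
    have habs : ∑ e' ∈ far, |cov e'| = |∑ e' ∈ far, cov e'| := by
      rw [sum_congr rfl hc, sum_congr rfl fun e' he' => congrArg abs (hc e' he')]
      simp [abs_mul]
    have hneg : ∑ e' ∈ far, cov e' = -∑ e' ∈ near, cov e' :=
      eq_neg_of_add_eq_zero_left ((sum_filter_add_sum_filter_not _ _ _).trans hrow)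
    rw [habs, hneg, abs_neg]
    exact (abs_sum_le_sum_abs _ _).trans hnear
  rw [← sum_filter_add_sum_filter_not _ fun e' : Sym2 (Fin n) => Disjoint e.toFinset e'.toFinset]
  linarith

lemma sum_sq_edgeDev_sub_ge {S T : Finset (Fin n)} (hS : S ∈ kSets n k) {D : ℕ}
    (hD : D ≤ #(S \ T)) :
    (D : ℝ) * (k - 1) / 2 ≤ ∑ e ∈ completeEdges n, (edgeDev n k e S - edgeDev n k e T) ^ 2 := by
  have hsq (e : Sym2 (Fin n)) :
      (if e.toFinset ⊆ S then (1 : ℝ) else 0) - (if e.toFinset ⊆ S ∩ T then 1 else 0) ≤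
        (edgeDev n k e S - edgeDev n k e T) ^ 2 := by
    simp only [edgeDev, subset_inter_iff, sub_sub_sub_cancel_right, ite_and]
    split_ifs <;> norm_num
  have hcard : (#(S \ T) : ℝ) + #(S ∩ T) = k := by
    rw [← mem_kSets.1 hS]
    exact_mod_cast card_sdiff_add_card_inter S T
  have hDle : (D : ℝ) ≤ #(S \ T) := by exact_mod_cast hD
  calc (D : ℝ) * (k - 1) / 2 ≤ Kr k - Kr #(S ∩ T) := by
        rcases Nat.eq_zero_or_pos k with rfl | hk
        · have : S = ∅ := card_eq_zero.1 (mem_kSets.1 hS)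
          subst this
          obtain rfl : D = 0 := by simpa using hD
          simp
        · have hk1 : (1 : ℝ) ≤ k := by exact_mod_cast hk
          have hinter : (#(S ∩ T) : ℝ) = k - #(S \ T) := by linarith
          have hnn : (0 : ℝ) ≤ #(S \ T) * #(S ∩ T) := by positivity
          rw [hinter] at hnn
          rw [Kr, Kr, hinter]
          nlinarith [mul_nonneg (sub_nonneg.2 hDle) (sub_nonneg.2 hk1)]
    _ = ∑ e ∈ completeEdges n, ((if e.toFinset ⊆ S then (1 : ℝ) else 0)
          - (if e.toFinset ⊆ S ∩ T then 1 else 0)) := by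
        rw [sum_sub_distrib, sum_ite_toFinset_subset hS, sum_ite_toFinset_subset (mem_kSets.2 rfl)]
    _ ≤ _ := sum_le_sum fun e _ => hsq e

lemma card_filter_card_le (n m : ℕ) :
    #{A : Finset (Fin n) | #A ≤ m} ≤ (n + 1) ^ m := by
  have hsub : ({A : Finset (Fin n) | #A ≤ m} : Finset _) ⊆
      (range (m + 1)).biUnion fun i => (univ : Finset (Fin n)).powersetCard i := by
    intro A hA
    simp only [mem_filter, mem_univ, true_and] at hA
    simp only [mem_biUnion, mem_range, mem_powersetCard_univ]
    exact ⟨#A, by omega, rfl⟩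
  refine (card_le_card hsub).trans (card_biUnion_le.trans ?_)
  rw [add_pow]
  refine sum_le_sum fun i hi => ?_
  have hpos : 0 < m.choose i := Nat.choose_pos (Nat.lt_succ_iff.1 (mem_range.1 hi))
  rw [card_powersetCard, card_univ, Fintype.card_fin, one_pow, mul_one]
  exact (Nat.choose_le_pow n i).trans (Nat.le_mul_of_pos_right _ hpos)

lemma card_filter_card_sdiff_lt_le {S : Finset (Fin n)} (hS : S ∈ kSets n k) (D : ℕ) :
    #{T ∈ kSets n k | #(S \ T) < D} ≤ (n + 1) ^ (2 * D) := by
  refine le_trans ?_ (card_filter_card_le n (2 * D))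
  refine card_le_card_of_injOn (fun T => symmDiff S T) (fun T hT => ?_)
    ((symmDiff_right_injective S).injOn)
  obtain ⟨hTk, hTD⟩ := mem_filter.1 hT
  have hsdiff : #(S \ T) = #(T \ S) :=
    card_sdiff_comm ((mem_kSets.1 hS).trans (mem_kSets.1 hTk).symm)
  have hle : #(symmDiff S T) ≤ #(S \ T) + #(T \ S) := card_union_le _ _
  simp only [coe_filter, mem_univ, true_and, Set.mem_ofPred_eq]
  omega

lemma pow_le_choose_real {r : ℝ} (hr : 1 ≤ r) (n k : ℕ) (h : r * k ≤ n) :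
    r ^ k ≤ (n.choose k : ℝ) := by
  induction k generalizing n with
  | zero => simp
  | succ k ih =>
    cases n with
    | zero => exact absurd h (by push_cast; nlinarith [k.cast_nonneg (α := ℝ)])
    | succ n =>
      push_cast at h
      have hpos : (0 : ℝ) < k + 1 := by positivity
      have hmul : ((n : ℝ) + 1) * n.choose k = (n + 1).choose (k + 1) * (k + 1) := by
        exact_mod_cast Nat.add_one_mul_choose_eq n k
      refine le_of_mul_le_mul_right ?_ hpos
      calc r ^ (k + 1) * (k + 1) = r * (k + 1) * r ^ k := by ring
        _ ≤ (n + 1) * n.choose k := by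
          gcongr
          exact ih n (by linarith)
        _ = _ := hmul

end KSets

section EdgeCount

variable {n k : ℕ} {p θ : ℝ}

lemma sum_edgeDev_eq_edgesIn_sub_muP {M : ℕ} {G : Finset (Sym2 (Fin n))} (hG : #G = M)
    (S : Finset (Fin n)) : ∑ e ∈ G, edgeDev n k e S = edgesIn G S - muP n M k := by
  have hedges : (edgesIn G S : ℝ) = ∑ e ∈ G, if e.toFinset ⊆ S then 1 else 0 := by
    rw [edgesIn, sum_boole]
    congr! with e
    simp only [subset_iff, Sym2.mem_toFinset]
  simp only [edgeDev]
  rw [hedges, sum_sub_distrib, sum_const, hG, nsmul_eq_mul, muP]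
  ring

/-- The characteristic function at `θ` of the centred edge count `e(S) - K M / N` of a graph `G`
with `M` edges, where `S` is a uniformly random `k`-set. -/
abbrev edgeCountChar (n k : ℕ) (θ : ℝ) (G : Finset (Sym2 (Fin n))) : ℂ :=
  subsetSumChar (kSets n k) (edgeDev n k) θ G

lemma sum_sq_norm_discreteDeriv_edgeCountChar_le (hk4 : 4 ≤ k) (hk : k ≤ n) (hθ : |θ| ≤ 1)
    (G : Finset (Sym2 (Fin n))) :
    ∑ e ∈ completeEdges n, ‖discreteDeriv (edgeCountChar n k θ) e G‖ ^ 2 ≤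
      8 * n * θ ^ 2 + 2 * Nr n * θ ^ 4 := by
  refine (sum_sq_norm_discreteDeriv_subsetSumChar_le (fun e _ S _ => abs_edgeDev_le_one hk e S)
    (by positivity) (fun e he => sum_abs_expect_edgeDev_mul_edgeDev_le hk4 hk he) hθ G).trans_eq ?_
  rw [cast_card_completeEdges]
  ring

lemma norm_bernoulliExpect_edgeCountChar_sub_le (hn : 2 ≤ n) (hk : k ≤ n) (hp : p ∈ Set.Icc 0 1)
    (hθ : |θ| ≤ 1) :
    ‖bernoulliExpect p (completeEdges n) (edgeCountChar n k θ) -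
      (Real.exp (-(p * (1 - p) * (Kr k * (1 - Kr k / Nr n)) * θ ^ 2 / 2)) : ℝ)‖ ≤
        Nr n * |θ| ^ 3 := by
  have h := norm_bernoulliExpect_subsetSumChar_sub_le (kSets_nonempty hk) hp
    (fun e _ S _ => abs_edgeDev_le_one hk e S) hθ (fun S hS => sum_edgeDev hn hS)
    (fun S hS => sum_edgeDev_sq hn hS)
  rwa [cast_card_completeEdges] at h

/- In the average over pairs `S, T`, those with `#(S \ T) ≥ D` contribute exponentially little and
the others are few. -/
lemma bernoulliExpect_sq_norm_edgeCountChar_le (hk : k ≤ n) (hp : p ∈ Set.Icc 0 1)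
    (hθ : |θ| ≤ Real.pi) (D : ℕ) :
    bernoulliExpect p (completeEdges n) (fun G => ‖edgeCountChar n k θ G‖ ^ 2) ≤
      Real.exp (-(p * (1 - p) / Real.pi ^ 2 * θ ^ 2 * (D * (k - 1)))) +
        (n + 1) ^ (2 * D) / n.choose k := by
  have hne := kSets_nonempty hk
  have hc : 0 ≤ p * (1 - p) := mul_nonneg hp.1 (sub_nonneg.2 hp.2)
  set X := Real.exp (-(p * (1 - p) / Real.pi ^ 2 * θ ^ 2 * (D * (k - 1))))
  refine (bernoulliExpect_sq_norm_subsetSumChar_le hp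
    (fun e _ S _ T _ => abs_edgeDev_sub_edgeDev_le_one e S T) hθ).trans
    (expect_le hne fun S hS => ?_)
  have hpair (T : Finset (Fin n)) :
      Real.exp (-(2 * (p * (1 - p)) / Real.pi ^ 2 * θ ^ 2 *
        ∑ e ∈ completeEdges n, (edgeDev n k e S - edgeDev n k e T) ^ 2)) ≤
          X + if #(S \ T) < D then 1 else 0 := by
    split_ifs with hD
    · exact le_add_of_nonneg_of_le (Real.exp_nonneg _) <| Real.exp_le_one_iff.2 <|
        neg_nonpos.2 <| mul_nonneg (by positivity) (sum_nonneg fun _ _ => sq_nonneg _)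
    · rw [add_zero, Real.exp_le_exp, neg_le_neg_iff]
      calc p * (1 - p) / Real.pi ^ 2 * θ ^ 2 * (D * (k - 1))
          = 2 * (p * (1 - p)) / Real.pi ^ 2 * θ ^ 2 * (D * (k - 1) / 2) := by ring
        _ ≤ _ := by
          gcongr
          exact sum_sq_edgeDev_sub_ge hS (not_lt.1 hD)
  calc _ ≤ 𝔼 T ∈ kSets n k, (X + if #(S \ T) < D then 1 else 0) :=
        expect_le_expect fun T _ => hpair T
    _ = X + #{T ∈ kSets n k | #(S \ T) < D} / n.choose k := by
        rw [expect_add_distrib, expect_const hne, expect_eq_sum_div_card, sum_boole, card_kSets]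
    _ ≤ X + (n + 1) ^ (2 * D) / n.choose k := by
        gcongr
        exact_mod_cast card_filter_card_sdiff_lt_le hS D

end EdgeCount

/-! ### Fourier inversion -/

section FourierInversion

lemma integral_cexp_int_mul_I (m : ℤ) :
    ∫ θ in (-Real.pi)..Real.pi, Complex.exp ((θ * m : ℝ) * Complex.I) =
      if m = 0 then ((2 * Real.pi : ℝ) : ℂ) else 0 := by
  split_ifs with hm
  · simp only [hm, Int.cast_zero, mul_zero, Complex.ofReal_zero, zero_mul, Complex.exp_zero,
      intervalIntegral.integral_const, sub_neg_eq_add, ← two_mul, Complex.real_smul, mul_one]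
  · have hmul (θ : ℝ) : ((θ * m : ℝ) : ℂ) * Complex.I = m * Complex.I * θ := by
      push_cast
      ring
    have hperiod : Complex.exp (m * Complex.I * (Real.pi : ℝ)) =
        Complex.exp (m * Complex.I * (-Real.pi : ℝ)) :=
      Complex.exp_eq_exp_iff_exists_int.2 ⟨m, by push_cast; ring⟩
    simp only [hmul]
    rw [integral_exp_mul_complex (mul_ne_zero (by exact_mod_cast hm) Complex.I_ne_zero), hperiod,
      sub_self, zero_div]

lemma Pru_eq_expect {α : Type*} (Ω : Finset α) (P : α → Prop) [DecidablePred P] :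
    Pru Ω P = 𝔼 a ∈ Ω, if P a then (1 : ℝ) else 0 := by
  rw [expect_eq_sum_div_card, sum_boole, Pru]
  congr!

lemma integral_expect_cexp_mul_cexp {α : Type*} (Ω : Finset α) (X : α → ℤ) (m : ℝ) (z : ℤ) :
    ∫ θ in (-Real.pi)..Real.pi, (𝔼 a ∈ Ω, Complex.exp ((θ * (X a - m) : ℝ) * Complex.I)) *
        Complex.exp ((-(θ * (z - m)) : ℝ) * Complex.I) =
      (2 * Real.pi * Pru Ω fun a => X a = z : ℝ) := by
  have hmul (θ : ℝ) : (𝔼 a ∈ Ω, Complex.exp ((θ * (X a - m) : ℝ) * Complex.I)) *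
      Complex.exp ((-(θ * (z - m)) : ℝ) * Complex.I) =
        (∑ a ∈ Ω, Complex.exp ((θ * (X a - z : ℤ) : ℝ) * Complex.I)) / #Ω := by
    rw [expect_mul, expect_eq_sum_div_card]
    congr 1
    refine sum_congr rfl fun a _ => ?_
    rw [← Complex.exp_add]
    push_cast
    ring_nf
  simp only [hmul]
  rw [intervalIntegral.integral_div, intervalIntegral.integral_finsetSum
    fun a _ => Continuous.intervalIntegrable (by fun_prop) _ _]
  simp only [integral_cexp_int_mul_I, sub_eq_zero]
  rw [Pru_eq_expect, expect_eq_sum_div_card]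
  push_cast
  rw [mul_div_assoc', mul_sum]
  simp only [apply_ite Complex.ofReal, Complex.ofReal_one, Complex.ofReal_zero, mul_ite, mul_one,
    mul_zero]

variable {v T : ℝ}

lemma integral_exp_neg_mul_cexp (hv : 0 < v) (m z : ℝ) :
    ∫ θ : ℝ, ((Real.exp (-(v * θ ^ 2 / 2)) : ℝ) : ℂ) *
        Complex.exp ((-(θ * (z - m)) : ℝ) * Complex.I) =
      (2 * Real.pi * gaussPdf m v z : ℝ) := by
  have hmul (θ : ℝ) : ((Real.exp (-(v * θ ^ 2 / 2)) : ℝ) : ℂ) *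
      Complex.exp ((-(θ * (z - m)) : ℝ) * Complex.I) =
        Complex.exp (Complex.I * (-(z - m) : ℝ) * θ) *
          Complex.exp (-(v / 2 : ℝ) * (θ : ℂ) ^ 2) := by
    rw [mul_comm, Complex.ofReal_exp]
    congr 2 <;> push_cast <;> ring
  have hsqrt : √(Real.pi / (v / 2)) = 2 * Real.pi * (√(2 * Real.pi * v))⁻¹ := by
    rw [← div_eq_mul_inv, eq_div_iff (by positivity), ← Real.sqrt_mul (by positivity)]
    exact Real.sqrt_eq_iff_mul_self_eq (by positivity) (by positivity) |>.2 (by field)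
  simp only [hmul]
  rw [fourierIntegral_gaussian (by simpa using hv), gaussPdf, gaussianPDFReal,
    Real.coe_toNNReal _ hv.le, ← mul_assoc, ← hsqrt, Complex.ofReal_mul, Real.sqrt_eq_rpow,
    Complex.ofReal_cpow (by positivity), Complex.ofReal_exp]
  congr 2 <;> push_cast
  · rfl
  · rfl
  · ring

lemma integrable_exp_neg_mul_sq_div_two (hv : 0 < v) :
    Integrable fun θ : ℝ => Real.exp (-(v * θ ^ 2 / 2)) :=
  (integrable_exp_neg_mul_sq (half_pos hv)).congr (.of_forall fun θ => by ring_nf)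

lemma setIntegral_compl_Ioc_exp_neg_le (hv : 0 < v) (hT : 0 < T) :
    ∫ θ in (Set.Ioc (-T) T)ᶜ, Real.exp (-(v * θ ^ 2 / 2)) ≤
      Real.exp (-(v * T ^ 2 / 4)) * √(4 * Real.pi / v) := by
  have hint : Integrable fun θ : ℝ => Real.exp (-(v * T ^ 2 / 4)) * Real.exp (-(v / 4) * θ ^ 2) :=
    (integrable_exp_neg_mul_sq (by positivity)).const_mul _
  calc ∫ θ in (Set.Ioc (-T) T)ᶜ, Real.exp (-(v * θ ^ 2 / 2))
      ≤ ∫ θ in (Set.Ioc (-T) T)ᶜ, Real.exp (-(v * T ^ 2 / 4)) * Real.exp (-(v / 4) * θ ^ 2) := by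
        refine setIntegral_mono_on (integrable_exp_neg_mul_sq_div_two hv).integrableOn
          hint.integrableOn measurableSet_Ioc.compl fun θ hθ => ?_
        rw [← Real.exp_add, Real.exp_le_exp]
        have hsq : T ^ 2 ≤ θ ^ 2 := by
          rw [Set.mem_compl_iff, Set.mem_Ioc, not_and_or, not_lt, not_le] at hθ
          rcases hθ with h | h <;> nlinarith
        nlinarith [mul_le_mul_of_nonneg_left hsq hv.le]
    _ ≤ ∫ θ : ℝ, Real.exp (-(v * T ^ 2 / 4)) * Real.exp (-(v / 4) * θ ^ 2) :=
        setIntegral_le_integral hint (.of_forall fun θ => by positivity)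
    _ = _ := by
        rw [integral_const_mul, integral_gaussian]
        congr 2
        field

lemma norm_setIntegral_sub_integral_le {β : Type*} [MeasurableSpace β] {μ : Measure β}
    {f g : β → ℂ} {A P : Set β} (hAP : A ⊆ P) (hA : MeasurableSet A) (hf : IntegrableOn f P μ)
    (hg : Integrable g μ) :
    ‖(∫ x in P, f x ∂μ) - ∫ x, g x ∂μ‖ ≤
      (∫ x in A, ‖f x - g x‖ ∂μ) + (∫ x in P \ A, ‖f x‖ ∂μ) + ∫ x in Aᶜ, ‖g x‖ ∂μ := by
  have hsplit : (∫ x in P, f x ∂μ) - ∫ x, g x ∂μ =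
      (∫ x in A, (f x - g x) ∂μ) + (∫ x in P \ A, f x ∂μ) - ∫ x in Aᶜ, g x ∂μ := by
    rw [integral_sub (hf.mono_set hAP) hg.integrableOn, ← integral_inter_add_sdiff hA hf,
      Set.inter_eq_self_of_subset_right hAP, ← integral_add_compl hA hg]
    ring
  rw [hsplit]
  exact (norm_sub_le _ _).trans <| add_le_add ((norm_add_le _ _).trans <| add_le_add
    (norm_integral_le_integral_norm _) (norm_integral_le_integral_norm _))
    (norm_integral_le_integral_norm _)

lemma two_pi_mul_abs_Pru_sub_gaussPdf_le {α : Type*} (Ω : Finset α) (X : α → ℤ) (m : ℝ)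
    (hv : 0 < v) (hT : 0 < T) (hTpi : T ≤ Real.pi) (z : ℤ) :
    2 * Real.pi * |(Pru Ω fun a => X a = z) - gaussPdf m v z| ≤
      (∫ θ in Set.Ioc (-T) T, ‖(𝔼 a ∈ Ω, Complex.exp ((θ * (X a - m) : ℝ) * Complex.I)) -
        (Real.exp (-(v * θ ^ 2 / 2)) : ℝ)‖) +
      (∫ θ in Set.Ioc (-Real.pi) Real.pi \ Set.Ioc (-T) T,
        ‖𝔼 a ∈ Ω, Complex.exp ((θ * (X a - m) : ℝ) * Complex.I)‖) +
      Real.exp (-(v * T ^ 2 / 4)) * √(4 * Real.pi / v) := by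
  set ψ : ℝ → ℂ := fun θ => 𝔼 a ∈ Ω, Complex.exp ((θ * (X a - m) : ℝ) * Complex.I)
  set g : ℝ → ℂ := fun θ => (Real.exp (-(v * θ ^ 2 / 2)) : ℝ)
  set twist : ℝ → ℂ := fun θ => Complex.exp ((-(θ * (z - m)) : ℝ) * Complex.I)
  have hψ : Continuous ψ := by
    simp only [ψ, expect_eq_sum_div_card]
    fun_prop
  have htwist : Continuous twist := by fun_prop
  have hnorm (w : ℂ) (θ : ℝ) : ‖w * twist θ‖ = ‖w‖ := by
    rw [norm_mul, Complex.norm_exp_ofReal_mul_I, mul_one]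
  have hg (θ : ℝ) : ‖g θ‖ = Real.exp (-(v * θ ^ 2 / 2)) :=
    Complex.norm_of_nonneg (Real.exp_nonneg _)
  have hgint : Integrable fun θ => g θ * twist θ := by
    refine (integrable_exp_neg_mul_sq_div_two hv).mono'
      (Continuous.aestronglyMeasurable (by fun_prop)) (.of_forall fun θ => ?_)
    rw [hnorm, hg]
  have hbound := norm_setIntegral_sub_integral_le (A := Set.Ioc (-T) T)
    (Set.Ioc_subset_Ioc (neg_le_neg hTpi) hTpi) measurableSet_Ioc
    (f := fun θ => ψ θ * twist θ) (hψ.mul htwist).integrableOn_Ioc hgint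
  simp only [← sub_mul, hnorm, hg] at hbound
  rw [← intervalIntegral.integral_of_le (by linarith [Real.pi_pos])] at hbound
  rw [integral_expect_cexp_mul_cexp, integral_exp_neg_mul_cexp hv, ← Complex.ofReal_sub, ← mul_sub,
    Complex.norm_real, Real.norm_eq_abs, abs_mul, abs_of_pos Real.two_pi_pos] at hbound
  exact hbound.trans (add_le_add_right (setIntegral_compl_Ioc_exp_neg_le hv hT) _)

end FourierInversion

/-! ### Averaging over the frequencies -/

section Average

variable {ι X : Type*} [DecidableEq ι] [MeasurableSpace X] {μ : Measure X} {p c : ℝ} {E : Finset ι}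
  {h : Finset ι → X → ℝ}

lemma bernoulliExpect_integral (hi : ∀ G, Integrable (h G) μ) :
    bernoulliExpect p E (fun G => ∫ x, h G x ∂μ) =
      ∫ x, bernoulliExpect p E (fun G => h G x) ∂μ := by
  simp only [bernoulliExpect, smul_eq_mul]
  rw [integral_finsetSum _ fun G _ => (hi G).const_mul _]
  exact sum_congr rfl fun G _ => (integral_const_mul _ _).symm

lemma bernoulliExpect_integral_le [IsFiniteMeasure μ] (hi : ∀ G, Integrable (h G) μ)
    (hc : ∀ᵐ x ∂μ, bernoulliExpect p E (fun G => h G x) ≤ c) :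
    bernoulliExpect p E (fun G => ∫ x, h G x ∂μ) ≤ μ.real Set.univ * c := by
  rw [bernoulliExpect_integral hi, ← smul_eq_mul, ← integral_const]
  exact integral_mono_ae (integrable_finsetSum _ fun G _ => (hi G).const_mul _)
    (integrable_const c) hc

lemma bernoulliExpect_exp_average_le [IsFiniteMeasure μ] [NeZero μ] (hp : p ∈ Set.Icc 0 1)
    (hi : ∀ G, Integrable (h G) μ) (hexp : ∀ G, Integrable (fun x => Real.exp (h G x)) μ)
    (hc : ∀ᵐ x ∂μ, bernoulliExpect p E (fun G => Real.exp (h G x)) ≤ c) :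
    bernoulliExpect p E (fun G => Real.exp (⨍ x, h G x ∂μ)) ≤ c := by
  have hμ : 0 < μ.real Set.univ := measureReal_univ_pos
  calc bernoulliExpect p E (fun G => Real.exp (⨍ x, h G x ∂μ))
      ≤ bernoulliExpect p E (fun G => (μ.real Set.univ)⁻¹ * ∫ x, Real.exp (h G x) ∂μ) :=
        bernoulliExpect_mono hp fun G _ => by
          rw [← smul_eq_mul, ← average_eq]
          exact convexOn_exp.map_average_le Real.continuous_exp.continuousOn isClosed_univ
            (.of_forall fun _ => Set.mem_univ _) (hi G) (hexp G)
    _ ≤ c := by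
        rw [bernoulliExpect_const_mul, inv_mul_le_iff₀ hμ]
        exact bernoulliExpect_integral_le hexp hc

end Average

lemma continuous_subsetSumChar {α ι : Type*} (Ω : Finset α) (x : ι → α → ℝ) (G : Finset ι) :
    Continuous fun θ => subsetSumChar Ω x θ G := by
  simp only [subsetSumChar, expect_eq_sum_div_card]
  fun_prop

section Frequencies

variable {n k : ℕ} {p T : ℝ}

/-- The mean over the low frequencies `|θ| ≤ T` of the distance of the characteristic function of
the edge count from its expectation over independent edges. -/
def lowFreqDeviation (n k : ℕ) (p T : ℝ) (G : Finset (Sym2 (Fin n))) : ℝ :=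
  ⨍ θ in Set.Ioc (-T) T,
    ‖edgeCountChar n k θ G - bernoulliExpect p (completeEdges n) (edgeCountChar n k θ)‖

/-- The integral over the high frequencies `T < |θ| ≤ π` of the modulus of the characteristic
function of the edge count. -/
def highFreqMass (n k : ℕ) (T : ℝ) (G : Finset (Sym2 (Fin n))) : ℝ :=
  ∫ θ in Set.Ioc (-Real.pi) Real.pi \ Set.Ioc (-T) T, ‖edgeCountChar n k θ G‖

lemma highFreqMass_nonneg (G : Finset (Sym2 (Fin n))) : 0 ≤ highFreqMass n k T G :=
  integral_nonneg fun _ => norm_nonneg _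

lemma continuous_edgeCountChar (G : Finset (Sym2 (Fin n))) :
    Continuous fun θ => edgeCountChar n k θ G :=
  continuous_subsetSumChar _ _ G

lemma continuous_norm_edgeCountChar_sub (p : ℝ) (G : Finset (Sym2 (Fin n))) :
    Continuous fun θ =>
      ‖edgeCountChar n k θ G - bernoulliExpect p (completeEdges n) (edgeCountChar n k θ)‖ := by
  refine ((continuous_edgeCountChar G).sub ?_).norm
  exact continuous_finsetSum _ fun H _ => (continuous_edgeCountChar H).const_smul _

lemma bernoulliExpect_exp_lowFreqDeviation_le (hk4 : 4 ≤ k) (hk : k ≤ n) (hp : p ∈ Set.Icc 0 1)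
    (hT : 0 < T) (hT1 : T ≤ 1) {L : ℝ} (hL : 0 ≤ L)
    (hLT : (2 * L) ^ 2 * (8 * n * T ^ 2 + 2 * Nr n * T ^ 4) ≤ 1) :
    bernoulliExpect p (completeEdges n) (fun G => Real.exp (L * lowFreqDeviation n k p T G)) ≤
      2 * Real.exp 1 := by
  have hne : NeZero (volume.restrict (Set.Ioc (-T) T)) :=
    ⟨Measure.restrict_eq_zero.not.2 (by simp [hT])⟩
  have hcont (G) := (continuous_norm_edgeCountChar_sub (n := n) (k := k) p G).const_mul L
  have hmain := bernoulliExpect_exp_average_le (E := completeEdges n) (c := 2 * Real.exp 1)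
    (μ := volume.restrict (Set.Ioc (-T) T)) hp
    (fun G => (hcont G).integrableOn_Ioc)
    (fun G => (Real.continuous_exp.comp (hcont G)).integrableOn_Ioc) ?_
  · simpa only [lowFreqDeviation, average_eq, integral_const_mul, smul_eq_mul, mul_left_comm]
      using hmain
  filter_upwards [ae_restrict_mem measurableSet_Ioc] with θ hθ
  have hθT : |θ| ≤ T := abs_le.2 ⟨hθ.1.le, hθ.2⟩
  refine bernoulliExpect_exp_mul_norm_sub_le hp (fun G _ =>
    (sum_sq_norm_discreteDeriv_edgeCountChar_le hk4 hk (hθT.trans hT1) G).trans ?_) hL hLT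
  have hsq : θ ^ 2 ≤ T ^ 2 := sq_le_sq' hθ.1.le hθ.2
  have hfour : θ ^ 4 ≤ T ^ 4 := by
    simpa only [← pow_mul] using pow_le_pow_left₀ (sq_nonneg θ) hsq 2
  have := Nr_nonneg n
  gcongr

lemma bernoulliExpect_highFreqMass_le (hk1 : 1 ≤ k) (hk : k ≤ n) (hp : p ∈ Set.Icc 0 1)
    (hT : 0 < T) (D : ℕ) :
    bernoulliExpect p (completeEdges n) (highFreqMass n k T) ≤
      2 * Real.pi * √(Real.exp (-(p * (1 - p) / Real.pi ^ 2 * T ^ 2 * (D * (k - 1)))) +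
        (n + 1) ^ (2 * D) / n.choose k) := by
  have hk' : (0 : ℝ) ≤ k - 1 := sub_nonneg.2 (by exact_mod_cast hk1)
  have hpq : 0 ≤ p * (1 - p) := mul_nonneg hp.1 (sub_nonneg.2 hp.2)
  set I := Set.Ioc (-Real.pi) Real.pi \ Set.Ioc (-T) T
  have hI : I ⊆ Set.Ioc (-Real.pi) Real.pi := Set.sdiff_subset
  have : IsFiniteMeasure (volume.restrict I) :=
    isFiniteMeasure_restrict.2 (measure_mono hI |>.trans_lt measure_Ioc_lt_top).ne
  refine (bernoulliExpect_integral_le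
    (fun G => (continuous_edgeCountChar G).norm.integrableOn_Ioc.mono_set hI) ?_).trans
    (mul_le_mul_of_nonneg_right ?_ (Real.sqrt_nonneg _))
  · filter_upwards [ae_restrict_mem (measurableSet_Ioc.diff measurableSet_Ioc)] with θ hθ
    have hTθ : T ^ 2 ≤ θ ^ 2 := by
      by_contra! hlt
      have := abs_lt_of_sq_lt_sq' hlt hT.le
      exact hθ.2 ⟨this.1, this.2.le⟩
    refine Real.le_sqrt_of_sq_le ((sq_bernoulliExpect_le hp _).trans
      ((bernoulliExpect_sq_norm_edgeCountChar_le hk hp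
        (abs_le.2 ⟨hθ.1.1.le, hθ.1.2⟩) D).trans ?_))
    gcongr
  · rw [measureReal_restrict_apply_univ]
    refine (measureReal_mono hI measure_Ioc_lt_top.ne).trans_eq ?_
    rw [Real.volume_real_Ioc_of_le (by linarith [Real.pi_pos])]
    ring

end Frequencies

/-! ### The local limit estimate for a fixed graph -/

section Variance

variable {n k M : ℕ}

lemma abs_exp_neg_sub_exp_neg_le {a b : ℝ} (ha : 0 ≤ a) (hb : 0 ≤ b) :
    |Real.exp (-a) - Real.exp (-b)| ≤ |a - b| := by
  wlog hab : a ≤ b generalizing a b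
  · rw [abs_sub_comm, abs_sub_comm a]
    exact this hb ha (le_of_not_ge hab)
  rw [abs_of_nonneg (sub_nonneg.2 (Real.exp_le_exp.2 (neg_le_neg hab))),
    abs_of_nonpos (sub_nonpos.2 hab)]
  calc Real.exp (-a) - Real.exp (-b) = Real.exp (-a) * (1 - Real.exp (a - b)) := by
        rw [mul_sub, ← Real.exp_add]
        ring_nf
    _ ≤ 1 * (1 - Real.exp (a - b)) := by
        gcongr
        · exact sub_nonneg.2 (Real.exp_le_one_iff.2 (sub_nonpos.2 hab))
        · exact Real.exp_le_one_iff.2 (neg_nonpos.2 ha)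
    _ ≤ -(a - b) := by linarith [Real.add_one_le_exp (a - b)]

lemma Kr_div_Nr_mem_Icc (hk : k ≤ n) : Kr k / Nr n ∈ Set.Icc 0 1 :=
  ⟨div_nonneg (Kr_nonneg k) (Nr_nonneg n), div_le_one_of_le₀ (Kr_le_Nr hk) (Nr_nonneg n)⟩

lemma sq_div_sq_sub_Kr_div_Nr_mem_Icc (hn : 2 ≤ n) (hk : k ≤ n) :
    (k : ℝ) ^ 2 / n ^ 2 - Kr k / Nr n ∈ Set.Icc 0 (1 / (n : ℝ)) := by
  have hn' : (2 : ℝ) ≤ n := by exact_mod_cast hn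
  have hk' : (k : ℝ) ≤ n := by exact_mod_cast hk
  have hn1 : (0 : ℝ) < n - 1 := by linarith
  have heq : (k : ℝ) ^ 2 / n ^ 2 - Kr k / Nr n = k * (n - k) / ((n : ℝ) ^ 2 * (n - 1)) := by
    unfold Kr Nr
    field_simp
    ring
  rw [heq]
  refine ⟨by have := sub_nonneg.2 hk'; positivity, ?_⟩
  rw [div_le_div_iff₀ (by positivity) (by linarith)]
  nlinarith [mul_nonneg (by linarith : (0 : ℝ) ≤ n) (sq_nonneg ((n : ℝ) - 2 * k)),
    mul_nonneg (sq_nonneg (n : ℝ)) (sub_nonneg.2 hn')]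

lemma abs_Kr_mul_one_sub_sub_le (hn : 2 ≤ n) (hk : k ≤ n) :
    |Kr k * (1 - Kr k / Nr n) - (k : ℝ) ^ 2 / 2 * (1 - (k : ℝ) ^ 2 / n ^ 2)| ≤ (n : ℝ) := by
  have hk' : (k : ℝ) ≤ n := by exact_mod_cast hk
  have hn' : (0 : ℝ) < n := by positivity
  obtain ⟨hκ0, hκ1⟩ := Kr_div_Nr_mem_Icc hk
  obtain ⟨hd0, hd1⟩ := sq_div_sq_sub_Kr_div_Nr_mem_Icc hn hk
  set κ := Kr k / Nr n
  set d := (k : ℝ) ^ 2 / n ^ 2 - κ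
  have hsplit : Kr k * (1 - κ) - (k : ℝ) ^ 2 / 2 * (1 - (k : ℝ) ^ 2 / n ^ 2) =
      (k : ℝ) ^ 2 / 2 * d - k / 2 * (1 - κ) := by
    unfold d Kr
    ring
  have hquad : (k : ℝ) ^ 2 / 2 * d ≤ n := by
    calc (k : ℝ) ^ 2 / 2 * d ≤ (n : ℝ) ^ 2 / 2 * (1 / n) := by gcongr
      _ = (n : ℝ) / 2 := by field_simp
      _ ≤ (n : ℝ) := by linarith
  have hlin : k / 2 * (1 - κ) ≤ n / 2 * (1 - 0) := by gcongr
  have := sub_nonneg.2 hκ1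
  rw [hsplit, abs_le]
  constructor <;> linarith [(by positivity : 0 ≤ k / 2 * (1 - κ)),
    (by positivity : 0 ≤ (k : ℝ) ^ 2 / 2 * d)]

lemma lamP_mul_sq (hn : 2 ≤ n) :
    lamP n M k * (n : ℝ) ^ 2 = M / Nr n * (1 - M / Nr n) *
      ((k : ℝ) ^ 2 / 2 * (1 - (k : ℝ) ^ 2 / n ^ 2)) := by
  have hN := (Nr_pos hn).ne'
  have hn' : (n : ℝ) ≠ 0 := by positivity
  unfold lamP
  field_simp

lemma lamP_mul_sq_ge {δ : ℝ} (hδ : 0 < δ) (hn : 2 ≤ n) (hM : M / Nr n ∈ Set.Icc δ (1 - δ))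
    (hk : (k : ℝ) / n ∈ Set.Icc δ (1 - δ)) : δ ^ 5 / 2 * (n : ℝ) ^ 2 ≤ lamP n M k * n ^ 2 := by
  have hM' : δ ≤ 1 - M / Nr n := by linarith [hM.2]
  have hk' : δ ≤ 1 - ((k : ℝ) / n) ^ 2 := by nlinarith [hk.1, hk.2]
  have hn' : (n : ℝ) ≠ 0 := by positivity
  calc δ ^ 5 / 2 * (n : ℝ) ^ 2 = δ * δ * ((δ ^ 2 * δ) / 2 * n ^ 2) := by ring
    _ ≤ M / Nr n * (1 - M / Nr n) *
        ((((k : ℝ) / n) ^ 2 * (1 - ((k : ℝ) / n) ^ 2)) / 2 * n ^ 2) := by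
        have := hδ.le.trans hM.1
        have := hδ.le.trans hM'
        gcongr
        exacts [hM.1, hk.1]
    _ = lamP n M k * n ^ 2 := by
        rw [lamP_mul_sq hn]
        field_simp

lemma norm_bernoulliExpect_edgeCountChar_sub_exp_lamP_le {θ : ℝ} (hn : 2 ≤ n) (hk : k ≤ n)
    (hp : M / Nr n ∈ Set.Icc 0 1) (hθ : |θ| ≤ 1) :
    ‖bernoulliExpect (M / Nr n) (completeEdges n) (edgeCountChar n k θ) -
      (Real.exp (-(lamP n M k * n ^ 2 * θ ^ 2 / 2)) : ℝ)‖ ≤ Nr n * |θ| ^ 3 + n * θ ^ 2 / 2 := by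
  have hq : 0 ≤ 1 - M / Nr n := sub_nonneg.2 hp.2
  have hpq : M / Nr n * (1 - M / Nr n) ∈ Set.Icc 0 1 :=
    ⟨mul_nonneg hp.1 hq, mul_le_one₀ hp.2 hq (by linarith [hp.1])⟩
  have hκ : 0 ≤ 1 - Kr k / Nr n := sub_nonneg.2 (Kr_div_Nr_mem_Icc hk).2
  have hxx : 0 ≤ 1 - (k : ℝ) ^ 2 / n ^ 2 := sub_nonneg.2 <|
    div_le_one_of_le₀ (by gcongr) (by positivity)
  have hK := Kr_nonneg k
  have hvar : ‖((Real.exp (-(M / Nr n * (1 - M / Nr n) * (Kr k * (1 - Kr k / Nr n)) * θ ^ 2 / 2)) :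
      ℝ) : ℂ) - (Real.exp (-(lamP n M k * n ^ 2 * θ ^ 2 / 2)) : ℝ)‖ ≤ n * θ ^ 2 / 2 := by
    rw [← Complex.ofReal_sub, Complex.norm_real, Real.norm_eq_abs, lamP_mul_sq hn]
    set c := M / Nr n * (1 - M / Nr n)
    have hc := hpq.1
    refine (abs_exp_neg_sub_exp_neg_le (by positivity) (by positivity)).trans ?_
    calc |c * (Kr k * (1 - Kr k / Nr n)) * θ ^ 2 / 2 -
          c * ((k : ℝ) ^ 2 / 2 * (1 - (k : ℝ) ^ 2 / n ^ 2)) * θ ^ 2 / 2|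
        = |c * (Kr k * (1 - Kr k / Nr n) - (k : ℝ) ^ 2 / 2 * (1 - (k : ℝ) ^ 2 / n ^ 2)) *
            (θ ^ 2 / 2)| := by ring_nf
      _ = c * |Kr k * (1 - Kr k / Nr n) - (k : ℝ) ^ 2 / 2 * (1 - (k : ℝ) ^ 2 / n ^ 2)| *
            (θ ^ 2 / 2) := by
          rw [abs_mul, abs_mul, abs_of_nonneg hc, abs_of_nonneg (by positivity : 0 ≤ θ ^ 2 / 2)]
      _ ≤ 1 * n * (θ ^ 2 / 2) := by
          gcongr
          exacts [hpq.2, abs_Kr_mul_one_sub_sub_le hn hk]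
      _ = n * θ ^ 2 / 2 := by ring
  exact (norm_sub_le_norm_sub_add_norm_sub _ _ _).trans
    (add_le_add (norm_bernoulliExpect_edgeCountChar_sub_le hn hk hp hθ) hvar)

end Variance

section FixedGraph

variable {n k M : ℕ} {T : ℝ} {G : Finset (Sym2 (Fin n))}

lemma edgeCountChar_eq_expect (hG : #G = M) (θ : ℝ) :
    edgeCountChar n k θ G = 𝔼 S ∈ kSets n k,
      Complex.exp ((θ * (((edgesIn G S : ℤ) : ℝ) - muP n M k) : ℝ) * Complex.I) := by
  simp only [edgeCountChar, subsetSumChar, sum_edgeDev_eq_edgesIn_sub_muP hG, Int.cast_natCast]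

lemma setIntegral_norm_edgeCountChar_sub_exp_le (hn : 2 ≤ n) (hk : k ≤ n)
    (hp : M / Nr n ∈ Set.Icc 0 1) (hT : 0 < T) (hT1 : T ≤ 1) (G : Finset (Sym2 (Fin n))) :
    ∫ θ in Set.Ioc (-T) T,
      ‖edgeCountChar n k θ G - (Real.exp (-(lamP n M k * n ^ 2 * θ ^ 2 / 2)) : ℝ)‖ ≤
    2 * T * (lowFreqDeviation n k (M / Nr n) T G + (Nr n * T ^ 3 + n * T ^ 2 / 2)) := by
  have hdev := continuous_norm_edgeCountChar_sub (k := k) (M / Nr n) G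
  have hvol : volume.real (Set.Ioc (-T) T) = 2 * T := by
    rw [Real.volume_real_Ioc_of_le (by linarith)]
    ring
  have hcont := continuous_edgeCountChar (k := k) G
  calc _ ≤ ∫ θ in Set.Ioc (-T) T, (‖edgeCountChar n k θ G -
        bernoulliExpect (M / Nr n) (completeEdges n) (edgeCountChar n k θ)‖ +
          (Nr n * T ^ 3 + n * T ^ 2 / 2)) := by
        refine setIntegral_mono_on (Continuous.integrableOn_Ioc (by fun_prop))
          (Continuous.integrableOn_Ioc (by fun_prop)) measurableSet_Ioc fun θ hθ => ?_
        have hθT : |θ| ≤ T := abs_le.2 ⟨hθ.1.le, hθ.2⟩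
        have hmean := norm_bernoulliExpect_edgeCountChar_sub_exp_lamP_le hn hk hp (hθT.trans hT1)
        refine (norm_sub_le_norm_sub_add_norm_sub _ _ _).trans
          (add_le_add_right (hmean.trans ?_) _)
        have := Nr_nonneg n
        have := sq_le_sq' hθ.1.le hθ.2
        gcongr
    _ = _ := by
        have hmean := setAverage_eq (μ := volume) (fun θ => ‖edgeCountChar n k θ G -
          bernoulliExpect (M / Nr n) (completeEdges n) (edgeCountChar n k θ)‖) (Set.Ioc (-T) T)
        rw [integral_add hdev.integrableOn_Ioc (by simp), setIntegral_const,
          hvol, smul_eq_mul, lowFreqDeviation, hmean, hvol, smul_eq_mul, mul_add (2 * T) (_⁻¹ * _),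
          mul_inv_cancel_left₀ (by positivity)]

lemma two_pi_mul_abs_Pru_edgesIn_sub_gaussPdf_le (hn : 2 ≤ n) (hk : k ≤ n)
    (hp : M / Nr n ∈ Set.Icc 0 1) (hv : 0 < lamP n M k * (n : ℝ) ^ 2) (hT : 0 < T) (hT1 : T ≤ 1)
    (hG : #G = M) (z : ℤ) :
    2 * Real.pi * |Pru (kSets n k) (fun S => (edgesIn G S : ℤ) = z) -
        gaussPdf (muP n M k) (lamP n M k * (n : ℝ) ^ 2) z| ≤
      2 * T * (lowFreqDeviation n k (M / Nr n) T G + (Nr n * T ^ 3 + n * T ^ 2 / 2)) +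
        highFreqMass n k T G +
        Real.exp (-(lamP n M k * n ^ 2 * T ^ 2 / 4)) * √(4 * Real.pi / (lamP n M k * n ^ 2)) := by
  have hfourier := two_pi_mul_abs_Pru_sub_gaussPdf_le (kSets n k)
    (fun S => (edgesIn G S : ℤ)) (muP n M k) hv hT (hT1.trans (by linarith [Real.pi_gt_three])) z
  simp only [← edgeCountChar_eq_expect hG] at hfourier
  refine hfourier.trans ?_
  gcongr
  · exact setIntegral_norm_edgeCountChar_sub_exp_le hn hk hp hT hT1 G
  · exact le_rfl

end FixedGraph

/-! ### The random graph with a fixed number of edges -/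

section FixedEdgeCount

variable {n k M : ℕ} {T : ℝ} {P : Finset (Sym2 (Fin n)) → Prop}

lemma graphsM_eq_powersetCard (n M : ℕ) : graphsM n M = (completeEdges n).powersetCard M := by
  ext G
  simp [graphsM, mem_powersetCard]

lemma graphsM_nonempty (hM : M ≤ Nr n) : (graphsM n M).Nonempty := by
  rw [graphsM_eq_powersetCard, powersetCard_nonempty]
  exact_mod_cast (cast_card_completeEdges n).symm ▸ hM

lemma Pru_mono {α : Type*} (Ω : Finset α) {P Q : α → Prop} (h : ∀ a, P a → Q a) :
    Pru Ω P ≤ Pru Ω Q := by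
  unfold Pru
  gcongr with a
  exact h a

lemma Pru_not {α : Type*} {Ω : Finset α} (hΩ : Ω.Nonempty) (Q : α → Prop) :
    Pru Ω (fun a => ¬ Q a) = 1 - Pru Ω Q := by
  classical
  have hcard : (#Ω : ℝ) ≠ 0 := by exact_mod_cast hΩ.card_pos.ne'
  have hadd : (#{a ∈ Ω | Q a} : ℝ) + #{a ∈ Ω | ¬ Q a} = #Ω := by
    exact_mod_cast card_filter_add_card_filter_not Q
  unfold Pru
  rw [eq_sub_iff_add_eq', ← add_div, ← div_self hcard, ← hadd]
  congr!

lemma one_sub_le_PrGnM (hn : 2 ≤ n) (hM : M / Nr n ∈ Set.Ioo 0 1)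
    {F : Finset (Sym2 (Fin n)) → ℝ} (hF : ∀ G, 0 ≤ F G) (hP : ∀ G, #G = M → F G < 1 → P G) :
    1 - (Nr n + 1) * bernoulliExpect (M / Nr n) (completeEdges n) F ≤ PrGnM n M P := by
  classical
  have hNr := Nr_pos hn
  have hbad := card_div_card_powersetCard_le (E := completeEdges n) (M := M) (F := F)
    (B := {G ∈ graphsM n M | ¬ P G}) hM
    (by rw [cast_card_completeEdges, mul_div_cancel₀ _ hNr.ne'])
    (fun G _ => hF G) (graphsM_eq_powersetCard n M ▸ filter_subset _ _) fun G hG => by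
      obtain ⟨hGM, hGP⟩ := mem_filter.1 hG
      rw [graphsM_eq_powersetCard] at hGM
      exact not_lt.1 fun h => hGP (hP G (mem_powersetCard.1 hGM).2 h)
  rw [cast_card_completeEdges, ← graphsM_eq_powersetCard] at hbad
  refine sub_le_comm.1 (le_trans (le_of_eq ?_) hbad)
  rw [PrGnM, ← Pru_not (graphsM_nonempty ((div_lt_one hNr).1 hM.2).le), Pru]
  congr!

lemma one_sub_le_PrGnM_of_lowFreqDeviation_of_highFreqMass (hk4 : 4 ≤ k) (hk : k ≤ n)
    (hM : M / Nr n ∈ Set.Ioo 0 1) (hT : 0 < T) (hT1 : T ≤ 1) {L : ℝ} (hL : 0 < L)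
    (hLT : (2 * L) ^ 2 * (8 * n * T ^ 2 + 2 * Nr n * T ^ 4) ≤ 1) (D : ℕ) (s : ℝ) {r : ℝ}
    (hr : 0 < r)
    (hP : ∀ G, #G = M → lowFreqDeviation n k (M / Nr n) T G ≤ s / L → highFreqMass n k T G ≤ r →
      P G) :
    1 - (Nr n + 1) * (2 * Real.exp 1 * Real.exp (-s) + 2 * Real.pi *
      √(Real.exp (-(M / Nr n * (1 - M / Nr n) / Real.pi ^ 2 * T ^ 2 * (D * (k - 1)))) +
        (n + 1) ^ (2 * D) / n.choose k) / r) ≤ PrGnM n M P := by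
  have hM' := Set.Ioo_subset_Icc_self hM
  refine le_trans ?_ (one_sub_le_PrGnM (F := fun G => Real.exp (-s) *
    Real.exp (L * lowFreqDeviation n k (M / Nr n) T G) + r⁻¹ * highFreqMass n k T G)
    (by omega) hM (fun G => ?_) fun G hG hF => hP G hG ?_ ?_)
  · rw [bernoulliExpect_add, bernoulliExpect_const_mul, bernoulliExpect_const_mul,
      mul_comm (_ * _) (Real.exp _), div_eq_inv_mul]
    have := Nr_nonneg n
    gcongr
    · exact bernoulliExpect_exp_lowFreqDeviation_le hk4 hk hM' hT hT1 hL.le hLT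
    · exact bernoulliExpect_highFreqMass_le (by omega) hk hM' hT D
  · have := highFreqMass_nonneg (k := k) (T := T) G
    positivity
  · have h : Real.exp (-s + L * lowFreqDeviation n k (M / Nr n) T G) < 1 := by
      rw [Real.exp_add]
      have := mul_nonneg (inv_nonneg.2 hr.le) (highFreqMass_nonneg (k := k) (T := T) G)
      linarith
    rw [le_div_iff₀' hL]
    linarith [Real.exp_lt_one_iff.1 h]
  · have h : highFreqMass n k T G / r < 1 := by
      rw [div_eq_inv_mul]
      have : 0 < Real.exp (-s) * Real.exp (L * lowFreqDeviation n k (M / Nr n) T G) := by positivity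
      linarith
    exact ((div_lt_one hr).1 h).le

end FixedEdgeCount

/-! ### Choice of the parameters -/

section Parameters

variable {δ y p : ℝ} {n k M : ℕ}

lemma exp_sq_mul_le_choose (hδ : 0 < δ) (hk : (k : ℝ) / n ∈ Set.Icc δ (1 - δ)) :
    Real.exp (δ ^ 2 * n) ≤ n.choose k := by
  have hn : (0 : ℝ) < n := Nat.cast_pos.2 (Nat.pos_of_ne_zero fun h => by simp [h] at hk; linarith)
  have hkn : δ * n ≤ k := (le_div_iff₀ hn).1 hk.1
  have hkδ : Real.exp δ * k ≤ n := by
    calc Real.exp δ * k ≤ Real.exp δ * (Real.exp (-δ) * n) := by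
          gcongr
          exact ((div_le_iff₀ hn).1 hk.2).trans
            (mul_le_mul_of_nonneg_right (Real.one_sub_le_exp_neg δ) hn.le)
      _ = n := by rw [← mul_assoc, ← Real.exp_add, add_neg_cancel, Real.exp_zero, one_mul]
  refine le_trans ?_ (pow_le_choose_real (Real.one_le_exp hδ.le) n k hkδ)
  rw [← Real.exp_nat_mul, Real.exp_le_exp, pow_two, mul_assoc, mul_comm (k : ℝ)]
  exact mul_le_mul_of_nonneg_left hkn hδ.le

lemma succ_pow_div_choose_le (hδ : 0 < δ) (hk : (k : ℝ) / n ∈ Set.Icc δ (1 - δ))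
    (hy : 8 ≤ δ ^ 2 * y) (hyn : y ^ 2 ≤ n) (hlog : n + 1 ≤ Real.exp y) :
    ((n : ℝ) + 1) ^ (2 * ⌈n / y ^ 2⌉₊) / n.choose k ≤ Real.exp (-(δ ^ 2 / 2 * n)) := by
  have hy0 : 0 < y := pos_of_mul_pos_right (hy.trans_lt' (by norm_num)) (sq_nonneg δ)
  have hceil : (⌈n / y ^ 2⌉₊ : ℝ) ≤ 2 * (n / y ^ 2) :=
    Nat.ceil_le_two_mul (by linarith [(one_le_div₀ (by positivity)).2 hyn])
  have hexponent : (2 * ⌈n / y ^ 2⌉₊ : ℕ) * y ≤ δ ^ 2 / 2 * n := by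
    push_cast
    calc 2 * ⌈n / y ^ 2⌉₊ * y ≤ 2 * (2 * (n / y ^ 2)) * y := by gcongr
      _ = 4 / y * n := by field_simp; ring
      _ ≤ δ ^ 2 / 2 * n := by
        refine mul_le_mul_of_nonneg_right ?_ n.cast_nonneg
        rw [div_le_div_iff₀ hy0 two_pos]
        linarith
  calc _ ≤ Real.exp y ^ (2 * ⌈n / y ^ 2⌉₊) / Real.exp (δ ^ 2 * n) := by
        gcongr
        exact exp_sq_mul_le_choose hδ hk
    _ = Real.exp ((2 * ⌈n / y ^ 2⌉₊ : ℕ) * y - δ ^ 2 * n) := by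
        rw [Real.exp_sub, Real.exp_nat_mul]
    _ ≤ _ := Real.exp_le_exp.2 (by linarith)

lemma le_highFreq_exponent (hδ : 0 < δ) (hδ2 : δ ≤ 1 / 2) (hp : p ∈ Set.Icc δ (1 - δ))
    (hk : δ * n ≤ k) (hn : 2 / δ ≤ n) (hy : 0 < y) :
    δ ^ 2 / 40 * y ^ 2 ≤
      p * (1 - p) / Real.pi ^ 2 * (y ^ 2 / n) ^ 2 * (⌈n / y ^ 2⌉₊ * (k - 1)) := by
  have hn0 : (0 : ℝ) < n := lt_of_lt_of_le (by positivity) hn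
  have hpq : δ / 2 ≤ p * (1 - p) := by nlinarith [hp.1, hp.2]
  have hk1 : δ * n / 2 ≤ k - 1 := by linarith [(div_le_iff₀' hδ).1 hn]
  have hpi : Real.pi ^ 2 ≤ 10 := by nlinarith [Real.pi_gt_three, Real.pi_lt_d2]
  calc δ ^ 2 / 40 * y ^ 2 = δ / 2 / 10 * (y ^ 2 / n) ^ 2 * (n / y ^ 2 * (δ * n / 2)) := by
        field_simp; norm_num
    _ ≤ _ := by
        have := Nat.le_ceil (n / y ^ 2)
        have hpq0 : 0 ≤ p * (1 - p) := hpq.trans' (by positivity)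
        gcongr

lemma sqrt_highFreq_le (hδ : 0 < δ) (hδ2 : δ ≤ 1 / 2) (hp : p ∈ Set.Icc δ (1 - δ))
    (hk : (k : ℝ) / n ∈ Set.Icc δ (1 - δ)) (hy : 8 ≤ δ ^ 2 * y) (hyn : y ^ 2 ≤ n)
    (hlog : n + 1 ≤ Real.exp y) :
    √(Real.exp (-(p * (1 - p) / Real.pi ^ 2 * (y ^ 2 / n) ^ 2 * (⌈n / y ^ 2⌉₊ * (k - 1)))) +
      (n + 1) ^ (2 * ⌈n / y ^ 2⌉₊) / n.choose k) ≤ 2 * Real.exp (-(δ ^ 2 / 80 * y ^ 2)) := by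
  have hy0 : 0 < y := pos_of_mul_pos_right (hy.trans_lt' (by norm_num)) (sq_nonneg δ)
  have hn0 : (0 : ℝ) < n := hyn.trans_lt' (by positivity)
  have hδn : 2 / δ ≤ n := by
    have hy1 : 1 ≤ y := by nlinarith
    rw [div_le_iff₀' hδ]
    nlinarith [mul_le_mul_of_nonneg_left hyn hδ.le]
  refine Real.sqrt_le_iff.2 ⟨by positivity, ?_⟩
  calc _ ≤ Real.exp (-(δ ^ 2 / 40 * y ^ 2)) + Real.exp (-(δ ^ 2 / 40 * y ^ 2)) := by
        refine add_le_add (Real.exp_le_exp.2 (neg_le_neg ?_))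
          ((succ_pow_div_choose_le hδ hk hy hyn hlog).trans ?_)
        · exact le_highFreq_exponent hδ hδ2 hp ((le_div_iff₀ hn0).1 hk.1) hδn hy0
        · gcongr
          norm_num
    _ ≤ 4 * Real.exp (-(δ ^ 2 / 40 * y ^ 2)) := by
        linarith [Real.exp_pos (-(δ ^ 2 / 40 * y ^ 2))]
    _ = _ := by
        rw [mul_pow, ← Real.exp_nat_mul]
        ring_nf

lemma mul_add_sqrt_highFreq_le (hδ : 0 < δ) (hδ2 : δ ≤ 1 / 2) (hp : p ∈ Set.Icc δ (1 - δ))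
    (hk : (k : ℝ) / n ∈ Set.Icc δ (1 - δ)) (hy : 640 ≤ δ ^ 2 * y) (hyn : y ^ 2 ≤ n)
    (hlog : n + 1 ≤ Real.exp y) :
    (Nr n + 1) * (2 * Real.exp 1 * Real.exp (-y ^ 2) + 2 * Real.pi *
      √(Real.exp (-(p * (1 - p) / Real.pi ^ 2 * (y ^ 2 / n) ^ 2 * (⌈n / y ^ 2⌉₊ * (k - 1)))) +
        (n + 1) ^ (2 * ⌈n / y ^ 2⌉₊) / n.choose k) / (1 / n ^ 2)) ≤ Real.exp (-y) := by
  have hδ1 : δ ^ 2 ≤ 1 := by nlinarith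
  have hy0 : 0 < y := pos_of_mul_pos_right (hy.trans_lt' (by norm_num)) (sq_nonneg δ)
  have hy1 : 640 ≤ y := hy.trans (mul_le_of_le_one_left hy0.le hδ1)
  have hn1 : (1 : ℝ) ≤ n := by nlinarith
  have hhigh := sqrt_highFreq_le hδ hδ2 hp hk (hy.trans' (by norm_num)) hyn hlog
  have hlow : Real.exp (-y ^ 2) ≤ Real.exp (-(δ ^ 2 / 80 * y ^ 2)) * n ^ 2 := by
    refine (Real.exp_le_exp.2 (neg_le_neg ?_)).trans
      (le_mul_of_one_le_right (by positivity) (one_le_pow₀ hn1))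
    exact mul_le_of_le_one_left (sq_nonneg y) (by linarith)
  have hNr : Nr n + 1 ≤ n ^ 2 := by unfold Nr; nlinarith
  calc _ ≤ (n : ℝ) ^ 2 * (2 * 3 * (Real.exp (-(δ ^ 2 / 80 * y ^ 2)) * n ^ 2) +
        2 * 4 * (2 * Real.exp (-(δ ^ 2 / 80 * y ^ 2))) / (1 / n ^ 2)) := by
        have := Real.exp_one_lt_three.le
        have := Real.pi_le_four
        gcongr
    _ = 22 * (n : ℝ) ^ 4 * Real.exp (-(δ ^ 2 / 80 * y ^ 2)) := by
        field_simp; norm_num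
    _ ≤ Real.exp (3 * y) * Real.exp y ^ 4 * Real.exp (-(8 * y)) := by
        have hexponent : 8 * y ≤ δ ^ 2 / 80 * y ^ 2 := by nlinarith
        gcongr
        · linarith [Real.add_one_le_exp (3 * y)]
        · linarith
    _ = Real.exp (-y) := by
        rw [← Real.exp_nat_mul, ← Real.exp_add, ← Real.exp_add]
        ring_nf

lemma sq_mul_lowFreq_le (hy : 0 < y) (hyn : y ^ 4 ≤ n) :
    (2 * (√n / (6 * y ^ 2))) ^ 2 * (8 * n * (y ^ 2 / n) ^ 2 + 2 * Nr n * (y ^ 2 / n) ^ 4) ≤ 1 := by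
  have hn0 : (0 : ℝ) < n := hyn.trans_lt' (by positivity)
  have hNr : 2 * Nr n ≤ n ^ 2 := by unfold Nr; nlinarith
  calc _ ≤ (2 * (√n / (6 * y ^ 2))) ^ 2 *
        (8 * n * (y ^ 2 / n) ^ 2 + n ^ 2 * (y ^ 2 / n) ^ 4) := by gcongr
    _ = (8 + y ^ 4 / n) / 9 := by
        rw [mul_pow, div_pow, Real.sq_sqrt n.cast_nonneg]
        field_simp
        norm_num
    _ ≤ 1 := by linarith [(div_le_one hn0).2 hyn]

lemma mul_lowFreq_error_le (hy : 1 ≤ y) (hyn : y ^ 4 ≤ n) :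
    n * (2 * (y ^ 2 / n) * (y ^ 2 / (√n / (6 * y ^ 2)) +
      (Nr n * (y ^ 2 / n) ^ 3 + n * (y ^ 2 / n) ^ 2 / 2))) ≤ 14 * (y ^ 6 / √n) := by
  have hn0 : (0 : ℝ) < n := hyn.trans_lt' (by positivity)
  have hNr : Nr n ≤ n ^ 2 / 2 := by unfold Nr; linarith
  have hyn' : y ^ 2 ≤ √n := Real.le_sqrt_of_sq_le (by rwa [← pow_mul])
  have hmean : Nr n * (y ^ 2 / n) ^ 3 + n * (y ^ 2 / n) ^ 2 / 2 ≤ y ^ 4 / √n := by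
    calc _ ≤ (n : ℝ) ^ 2 / 2 * (y ^ 2 / n) ^ 3 + y ^ 2 * (n * (y ^ 2 / n) ^ 2 / 2) := by
          gcongr
          exact le_mul_of_one_le_left (by positivity) (one_le_pow₀ hy)
      _ = y ^ 4 / √n * (y ^ 2 / √n) := by
          rw [div_mul_div_comm, Real.mul_self_sqrt n.cast_nonneg]
          field_simp
          norm_num
      _ ≤ y ^ 4 / √n := mul_le_of_le_one_right (by positivity) ((div_le_one (by positivity)).2 hyn')
  calc _ ≤ n * (2 * (y ^ 2 / n) * (y ^ 2 / (√n / (6 * y ^ 2)) + y ^ 4 / √n)) := by gcongr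
    _ = _ := by field_simp; norm_num

lemma mul_gaussian_tail_le {v x : ℝ} (hy : 1 ≤ y) (hδy : 640 ≤ δ ^ 5 * y) (hx : 0 < x)
    (hv : δ ^ 5 / 2 * x ^ 2 ≤ v) :
    x * (Real.exp (-(v * (y ^ 2 / x) ^ 2 / 4)) * √(4 * Real.pi / v)) ≤ Real.exp (-y) := by
  have hy0 : 0 < y := one_pos.trans_le hy
  have hδ5 : 0 < δ ^ 5 := pos_of_mul_pos_left (hδy.trans_lt' (by norm_num)) hy0.le
  have hexponent : 2 * y ≤ v * (y ^ 2 / x) ^ 2 / 4 := by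
    calc 2 * y ≤ 640 * (1 * y) / 8 := by linarith
      _ ≤ δ ^ 5 * y * (y ^ 2 * y) / 8 := by
          gcongr
          exact one_le_pow₀ hy
      _ = δ ^ 5 / 2 * x ^ 2 * (y ^ 2 / x) ^ 2 / 4 := by field_simp; ring
      _ ≤ _ := by gcongr
  have hsqrt : √(4 * Real.pi / v) ≤ y / x := by
    refine Real.sqrt_le_iff.2 ⟨by positivity, ?_⟩
    calc 4 * Real.pi / v ≤ 4 * 4 / (δ ^ 5 / 2 * x ^ 2) := by
          gcongr
          exact Real.pi_le_four
      _ = 32 / δ ^ 5 * (1 / x ^ 2) := by field_simp; norm_num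
      _ ≤ y ^ 2 * (1 / x ^ 2) := by
          gcongr
          rw [div_le_iff₀' hδ5]
          nlinarith
      _ = (y / x) ^ 2 := by ring
  calc _ ≤ x * (Real.exp (-(2 * y)) * (y / x)) := by gcongr
    _ = y * Real.exp (-(2 * y)) := by field_simp
    _ ≤ Real.exp y * Real.exp (-(2 * y)) := by
        gcongr
        linarith [Real.add_one_le_exp y]
    _ = Real.exp (-y) := by
        rw [← Real.exp_add]
        ring_nf

end Parameters

section Quantitative

variable {δ y : ℝ} {n k M : ℕ}

lemma mul_abs_Pru_edgesIn_sub_gaussPdf_le (hδ : 0 < δ) (hn : 2 ≤ n) (hkn : k ≤ n)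
    (hM : M / Nr n ∈ Set.Icc δ (1 - δ)) (hk : (k : ℝ) / n ∈ Set.Icc δ (1 - δ)) (hy : 1 ≤ y)
    (hδy : 640 ≤ δ ^ 5 * y) (hyn : y ^ 4 ≤ n) (hlog : n + 1 ≤ Real.exp y)
    {G : Finset (Sym2 (Fin n))} (hG : #G = M)
    (hlow : lowFreqDeviation n k (M / Nr n) (y ^ 2 / n) G ≤ y ^ 2 / (√n / (6 * y ^ 2)))
    (hhigh : highFreqMass n k (y ^ 2 / n) G ≤ 1 / n ^ 2) (z : ℤ) :
    n * |Pru (kSets n k) (fun S => (edgesIn G S : ℤ) = z) -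
      gaussPdf (muP n M k) (lamP n M k * (n : ℝ) ^ 2) z| ≤ 3 * (y ^ 6 / √n) := by
  have hn0 : (0 : ℝ) < n := by positivity
  have hn1 : (1 : ℝ) ≤ n := (one_le_pow₀ hy).trans hyn
  have hTn : y ^ 2 / n ≤ 1 := (div_le_one hn0).2
    ((pow_le_pow_right₀ hy (by norm_num)).trans hyn)
  have hv := lamP_mul_sq_ge hδ hn hM hk
  have hsmall : 1 / (n : ℝ) ≤ y ^ 6 / √n := by
    have hsqrtn : √n ≤ n := Real.sqrt_le_self_iff.2 (.inr hn1)
    have hy6 : 1 ≤ y ^ 6 := one_le_pow₀ hy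
    gcongr
  have hexp : Real.exp (-y) ≤ 1 / n := by
    rw [Real.exp_neg, ← one_div]
    gcongr
    linarith
  have hmain := two_pi_mul_abs_Pru_edgesIn_sub_gaussPdf_le hn hkn
    (Set.Icc_subset_Icc hδ.le (by linarith) hM) (hv.trans_lt' (by positivity)) (by positivity)
    hTn hG z
  set dist := |Pru (kSets n k) (fun S => (edgesIn G S : ℤ) = z) -
      gaussPdf (muP n M k) (lamP n M k * (n : ℝ) ^ 2) z|
  set tail := Real.exp (-(lamP n M k * n ^ 2 * (y ^ 2 / n) ^ 2 / 4)) *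
    √(4 * Real.pi / (lamP n M k * n ^ 2))
  have hscaled : 2 * Real.pi * (n * dist) ≤ 16 * (y ^ 6 / √n) := by
    calc 2 * Real.pi * (n * dist) = n * (2 * Real.pi * dist) := by ring
      _ ≤ n * (2 * (y ^ 2 / n) * (y ^ 2 / (√n / (6 * y ^ 2)) +
            (Nr n * (y ^ 2 / n) ^ 3 + n * (y ^ 2 / n) ^ 2 / 2)) + 1 / n ^ 2 + tail) := by
          refine mul_le_mul_of_nonneg_left (hmain.trans ?_) hn0.le
          gcongr
      _ = n * (2 * (y ^ 2 / n) * (y ^ 2 / (√n / (6 * y ^ 2)) +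
            (Nr n * (y ^ 2 / n) ^ 3 + n * (y ^ 2 / n) ^ 2 / 2))) + 1 / n + n * tail := by
          field_simp
      _ ≤ 14 * (y ^ 6 / √n) + y ^ 6 / √n + y ^ 6 / √n :=
          add_le_add (add_le_add (mul_lowFreq_error_le hy hyn) hsmall)
            ((mul_gaussian_tail_le hy hδy hn0 hv).trans (hexp.trans hsmall))
      _ = 16 * (y ^ 6 / √n) := by ring
  nlinarith [Real.pi_gt_three, mul_nonneg hn0.le (abs_nonneg _ : 0 ≤ dist)]

lemma one_sub_exp_le_PrGnM (hδ : 0 < δ) (hM : M / Nr n ∈ Set.Icc δ (1 - δ))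
    (hk : (k : ℝ) / n ∈ Set.Icc δ (1 - δ)) (hy : 1 ≤ y) (hδy : 640 ≤ δ ^ 5 * y)
    (hyn : y ^ 4 ≤ n) (hlog : n + 1 ≤ Real.exp y) :
    1 - Real.exp (-y) ≤ PrGnM n M (fun G => ∀ z : ℤ,
      n * |Pru (kSets n k) (fun S => (edgesIn G S : ℤ) = z) -
        gaussPdf (muP n M k) (lamP n M k * (n : ℝ) ^ 2) z| ≤ 3 * (y ^ 6 / √n)) := by
  have hδ2 : δ ≤ 1 / 2 := by linarith [hM.1, hM.2]
  have hδy2 : 640 ≤ δ ^ 2 * y := hδy.trans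
    (mul_le_mul_of_nonneg_right (pow_le_pow_of_le_one hδ.le (by linarith) (by norm_num))
      (by linarith))
  have hy2n : y ^ 2 ≤ n := (pow_le_pow_right₀ hy (by norm_num)).trans hyn
  have hn0 : (0 : ℝ) < n := hyn.trans_lt' (by positivity)
  have hkn : k ≤ n := by exact_mod_cast (div_le_one hn0).1 (hk.2.trans (by linarith))
  have hk4 : 4 ≤ k := by
    have : (4 : ℝ) ≤ k := by
      calc (4 : ℝ) ≤ δ ^ 5 * y := by linarith
        _ ≤ δ * y ^ 4 := by
          gcongr
          exacts [pow_le_of_le_one hδ.le (by linarith) (by norm_num), le_self_pow₀ hy (by norm_num)]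
        _ ≤ δ * n := by gcongr
        _ ≤ k := (le_div_iff₀ hn0).1 hk.1
    exact_mod_cast this
  have hMIoo : M / Nr n ∈ Set.Ioo 0 1 := ⟨hδ.trans_le hM.1, by linarith [hM.2]⟩
  refine le_trans ?_ (one_sub_le_PrGnM_of_lowFreqDeviation_of_highFreqMass hk4 hkn hMIoo
    (by positivity) ((div_le_one hn0).2 hy2n) (by positivity)
    (sq_mul_lowFreq_le (one_pos.trans_le hy) hyn) ⌈n / y ^ 2⌉₊ (y ^ 2) (r := 1 / n ^ 2)
    (by positivity) fun G hG hlow hhigh => mul_abs_Pru_edgesIn_sub_gaussPdf_le hδ (by omega) hkn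
      hM hk hy hδy hyn hlog hG hlow hhigh)
  exact sub_le_sub_left (mul_add_sqrt_highFreq_le hδ hδ2 hM hk hδy2 hy2n hlog) 1

open Filter in
lemma exists_rpow_parameter (hδ : 0 < δ) {b : ℝ} (hb : -(1 / 2) < b) :
    ∃ γ > (0 : ℝ), ∀ᶠ x : ℝ in atTop, 1 ≤ x ^ γ ∧ 640 ≤ δ ^ 5 * x ^ γ ∧ (x ^ γ) ^ 4 ≤ x ∧
      x + 1 ≤ Real.exp (x ^ γ) ∧ 3 * ((x ^ γ) ^ 6 / √x) ≤ x ^ b := by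
  refine ⟨min (1 / 4) ((b + 1 / 2) / 7), lt_min (by norm_num) (by linarith), ?_⟩
  set γ := min (1 / 4) ((b + 1 / 2) / 7)
  have hγ : 0 < γ := lt_min (by norm_num) (by linarith)
  have hy := tendsto_rpow_atTop hγ
  have hlog : ∀ᶠ x : ℝ in atTop, x + 1 ≤ Real.exp (x ^ γ) := by
    filter_upwards [((isLittleO_rpow_exp_atTop γ⁻¹).comp_tendsto hy).bound (half_pos one_pos),
      eventually_ge_atTop 1] with x hx hx1
    have hx0 : 0 ≤ x := by linarith
    simp only [Function.comp_apply, Real.rpow_rpow_inv hx0 hγ.ne', Real.norm_of_nonneg hx0,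
      Real.norm_of_nonneg (Real.exp_pos _).le] at hx
    linarith
  filter_upwards [hlog, hy.eventually_ge_atTop 3, hy.eventually_ge_atTop (640 / δ ^ 5),
    eventually_ge_atTop 1] with x hlog hy3 hyδ hx
  refine ⟨by linarith, (div_le_iff₀' (by positivity)).1 hyδ, ?_, hlog, ?_⟩
  · rw [← Real.rpow_mul_natCast (by positivity)]
    refine Real.rpow_le_self_of_one_le hx ?_
    push_cast
    linarith [min_le_left (1 / 4) ((b + 1 / 2) / 7)]
  · calc 3 * ((x ^ γ) ^ 6 / √x) ≤ x ^ γ * ((x ^ γ) ^ 6 / √x) := by gcongr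
      _ = x ^ (γ * (7 : ℕ)) / √x := by
        rw [Real.rpow_mul_natCast (by positivity)]
        ring
      _ ≤ x ^ (b + 1 / 2) / √x := by
        gcongr
        push_cast
        linarith [min_le_right (1 / 4) ((b + 1 / 2) / 7)]
      _ = x ^ b := by
        rw [Real.rpow_add (by positivity), ← Real.sqrt_eq_rpow, mul_div_cancel_right₀]
        positivity

end Quantitative

theorem stmt_1_general (δ b : ℝ) (hδ : 0 < δ) (hb : -(1 / 2) < b) :
    ∃ η > (0 : ℝ), ∃ n₀ : ℕ, ∀ n ≥ n₀, ∀ M k : ℕ,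
      δ ≤ (M : ℝ) / Nr n → (M : ℝ) / Nr n ≤ 1 - δ →
      δ ≤ (k : ℝ) / n → (k : ℝ) / n ≤ 1 - δ →
      PrGnM n M (fun G => ∀ z : ℤ,
          (n : ℝ) * |Pru (kSets n k) (fun S => (edgesIn G S : ℤ) = z) -
            gaussPdf (muP n M k) (lamP n M k * (n : ℝ) ^ 2) (z : ℝ)|
          ≤ (n : ℝ) ^ b)
        ≥ 1 - Real.exp (-(n : ℝ) ^ η) := by
  obtain ⟨γ, hγ, hparam⟩ := exists_rpow_parameter hδ hb
  obtain ⟨n₀, hn₀⟩ :=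
    Filter.eventually_atTop.1 (tendsto_natCast_atTop_atTop.eventually hparam)
  refine ⟨γ, hγ, n₀, fun n hn M k hM hM' hk hk' => ?_⟩
  obtain ⟨hy, hδy, hyn, hlog, hbound⟩ := hn₀ n hn
  exact (one_sub_exp_le_PrGnM hδ ⟨hM, hM'⟩ ⟨hk, hk'⟩ hy hδy hyn hlog).trans
    (Pru_mono _ fun G hG z => (hG z).trans hbound)

/-- Local limit theorem, Theorem 1.2.
For fixed `δ, ε > 0` there are `η > 0` and `n₀` such that for all `n ≥ n₀` and all `M, k`
with `M/N, k/n ∈ [δ, 1-δ]`, with probability at least `1 - exp(-n^η)` over `G = G_{n,M}`: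
for all integers `z`, `n·|P_S(e(S) = z) - φ(z)| ≤ n^(-1/14+ε)`, where `φ` is the density
of `N(K·M/N, λ·n²)`. -/
theorem stmt_1 (δ ε : ℝ) (hδ : 0 < δ) (hε : 0 < ε) :
    ∃ η > (0:ℝ), ∃ n₀ : ℕ, ∀ n ≥ n₀, ∀ M k : ℕ,
      δ ≤ (M : ℝ) / Nr n → (M : ℝ) / Nr n ≤ 1 - δ →
      δ ≤ (k : ℝ) / n → (k : ℝ) / n ≤ 1 - δ →
      PrGnM n M (fun G => ∀ z : ℤ,
          (n : ℝ) * |Pru (kSets n k) (fun S => (edgesIn G S : ℤ) = z) -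
            gaussPdf (muP n M k) (lamP n M k * (n:ℝ) ^ 2) (z : ℝ)|
          ≤ (n : ℝ) ^ (-(1/14 : ℝ) + ε))
        ≥ 1 - Real.exp (-(n : ℝ) ^ η) := by
  exact stmt_1_general δ _ hδ (by linarith)
end
end

section
/- Let G be any graph on vertex set [n] with M edges and let 1 ≤ k ≤ n−1, k̄ = n−k. Then for every k-element subset S ⊆ [n], with x uniform on S and x̄ uniform on S̄ independently and S' = (S∖{x})∪{x̄}, S̄' = (S̄∖{x̄})∪{x}, one has E_{x,x̄}[e(S') − e(S)] = −((n−1+k̄)/(k·k̄))·(e(S) − K·M/N) − ((k−1)/(k·k̄))·(e(S̄) − K̄·M/N), and symmetrically E_{x,x̄}[e(S̄') − e(S̄)] = −((n−1+k)/(k·k̄))·(e(S̄) − K̄·M/N) − ((k̄−1)/(k·k̄))·(e(S) − K·M/N). Equivalently, E[𝐖' − 𝐖 | 𝐖] = −Λ𝐖, where Λ = (1/(k·k̄))·[[n+k̄−1, k−1],[k̄−1, n+k−1]]. -/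
open Finset MeasureTheory ProbabilityTheory

noncomputable section

/-!
Moving `x` out of `S` and `y` into it changes `e(S)` by `d_S(y) - d_S(x) - [xy ∈ G]`. Summed over
`(x, y) ∈ S × T`, with `T` disjoint from `S`, the three terms are `|S| e(S, T)`, `|T| · 2 e(S)`
(handshake) and `e(S, T)`, so the total change is `(|S| - 1) e(S, T) - 2 |T| e(S)`. For `T = Sᶜ`,
substitute `e(S, Sᶜ) = M - e(S) - e(Sᶜ)`; the terms in `M` produced by centring the edge counts
cancel because `(n - 1 + k̄) K + (k - 1) K̄ = (k - 1) N`. The second identity is the first one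
for `Sᶜ`.
-/

section EdgeCounts

variable {n : ℕ} {G : Finset (Sym2 (Fin n))} {S T : Finset (Fin n)} {v x y : Fin n}

/-- `e(S, T)`, the number of pairs in `S × T` that are edges of `G`. An edge with both endpoints
in `S ∩ T` is counted twice. -/
def edgesBetween (G : Finset (Sym2 (Fin n))) (S T : Finset (Fin n)) : ℕ :=
  ∑ v ∈ T, dS G S v

lemma dS_eq_sum (G : Finset (Sym2 (Fin n))) (S : Finset (Fin n)) (v : Fin n) :
    dS G S v = ∑ w ∈ S, if s(v, w) ∈ G then 1 else 0 :=
  card_filter _ _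

lemma dS_insert (hx : x ∉ S) (v : Fin n) :
    dS G (insert x S) v = dS G S v + if s(v, x) ∈ G then 1 else 0 := by
  rw [dS_eq_sum, dS_eq_sum, sum_insert hx, add_comm]

lemma dS_union (hST : Disjoint S T) (v : Fin n) :
    dS G (S ∪ T) v = dS G S v + dS G T v := by
  simp only [dS_eq_sum, sum_union hST]

lemma IsGraph.dS_insert_self (hG : IsGraph G) (hv : v ∉ S) : dS G (insert v S) v = dS G S v := by
  have no_loop : s(v, v) ∉ G := fun h => hG _ h rfl
  rw [dS_insert hv, if_neg no_loop, add_zero]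

lemma edgesBetween_eq_sum (G : Finset (Sym2 (Fin n))) (S T : Finset (Fin n)) :
    edgesBetween G S T = ∑ x ∈ S, ∑ y ∈ T, if s(x, y) ∈ G then 1 else 0 := by
  simp only [edgesBetween, dS_eq_sum]
  rw [sum_comm]
  simp only [Sym2.eq_swap]

lemma edgesIn_empty (G : Finset (Sym2 (Fin n))) : edgesIn G ∅ = 0 := by
  rw [edgesIn, card_eq_zero, filter_eq_empty_iff]
  intro e _ he
  exact notMem_empty _ (he _ e.out_fst_mem)

lemma edgesIn_univ (G : Finset (Sym2 (Fin n))) : edgesIn G univ = G.card := by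
  simp [edgesIn]

lemma IsGraph.edgesIn_insert (hG : IsGraph G) (hv : v ∉ S) :
    edgesIn G (insert v S) = edgesIn G S + dS G S v := by
  have split_edges : (G.filter fun e => ∀ u ∈ e, u ∈ insert v S)
      = (G.filter fun e => ∀ u ∈ e, u ∈ S)
        ∪ (S.filter fun w => s(v, w) ∈ G).image fun w => s(v, w) := by
    ext e
    induction e using Sym2.ind with
    | _ a b =>
      have hab (h : s(a, b) ∈ G) : a ≠ b := by simpa using hG _ h
      simp only [mem_filter, mem_union, mem_image, mem_insert, Sym2.mem_iff, forall_eq_or_imp,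
        forall_eq]
      grind [Sym2.eq_swap]
  have disjoint_edges : Disjoint (G.filter fun e => ∀ u ∈ e, u ∈ S)
      ((S.filter fun w => s(v, w) ∈ G).image fun w => s(v, w)) := by
    simp only [disjoint_left, mem_filter, mem_image]
    rintro _ ⟨-, inside⟩ ⟨w, -, rfl⟩
    exact hv (inside v (Sym2.mem_mk_left v w))
  rw [edgesIn, split_edges, card_union_of_disjoint disjoint_edges,
    card_image_of_injective _ fun _ _ => Sym2.congr_right.1, edgesIn, dS]

lemma IsGraph.edgesIn_erase_add (hG : IsGraph G) (hx : x ∈ S) :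
    edgesIn G (S.erase x) + dS G S x = edgesIn G S := by
  have edges_x := hG.edgesIn_insert (notMem_erase x S)
  have degree_x := hG.dS_insert_self (notMem_erase x S)
  rw [insert_erase hx] at edges_x degree_x
  rw [edges_x, degree_x]

lemma IsGraph.edgesIn_swap_add (hG : IsGraph G) (hx : x ∈ S) (hy : y ∉ S) :
    edgesIn G (insert y (S.erase x)) + dS G S x + (if s(x, y) ∈ G then 1 else 0)
      = edgesIn G S + dS G S y := by
  have insert_y := hG.edgesIn_insert (mt mem_of_mem_erase hy : y ∉ S.erase x)
  have erase_x := hG.edgesIn_erase_add hx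
  have degree_y := dS_insert (G := G) (notMem_erase x S) y
  rw [insert_erase hx, Sym2.eq_swap] at degree_y
  omega

lemma IsGraph.edgesBetween_self (hG : IsGraph G) (S : Finset (Fin n)) :
    edgesBetween G S S = 2 * edgesIn G S := by
  induction S using Finset.induction_on with
  | empty => simp [edgesBetween, edgesIn_empty]
  | insert v S hv ih =>
    have degree_v : (∑ w ∈ S, if s(w, v) ∈ G then 1 else 0) = dS G S v := by
      simp only [dS_eq_sum, Sym2.eq_swap]
    calc edgesBetween G (insert v S) (insert v S)
      _ = dS G S v + ∑ w ∈ S, (dS G S w + if s(w, v) ∈ G then 1 else 0) := by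
        rw [edgesBetween, sum_insert hv, hG.dS_insert_self hv]
        simp only [dS_insert hv]
      _ = dS G S v + (2 * edgesIn G S + dS G S v) := by
        rw [sum_add_distrib, degree_v, ← ih, edgesBetween]
      _ = 2 * edgesIn G (insert v S) := by rw [hG.edgesIn_insert hv]; ring

lemma IsGraph.edgesIn_union (hG : IsGraph G) (hST : Disjoint S T) :
    edgesIn G (S ∪ T) = edgesIn G S + edgesIn G T + edgesBetween G S T := by
  induction T using Finset.induction_on with
  | empty => simp [edgesBetween, edgesIn_empty]
  | insert v T hv ih =>
    obtain ⟨hvS, hST⟩ := disjoint_insert_right.1 hST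
    have hvST : v ∉ S ∪ T := by simp only [mem_union, hvS, hv, or_self, not_false_eq_true]
    rw [union_insert, hG.edgesIn_insert hvST, hG.edgesIn_insert hv, dS_union hST, ih hST,
      edgesBetween, edgesBetween, sum_insert hv]
    ring

lemma IsGraph.card_eq_edgesIn_add_compl (hG : IsGraph G) (S : Finset (Fin n)) :
    G.card = edgesIn G S + edgesIn G Sᶜ + edgesBetween G S Sᶜ := by
  rw [← hG.edgesIn_union disjoint_compl_right, union_compl, edgesIn_univ]

end EdgeCounts

section Swap

variable {n : ℕ} {G : Finset (Sym2 (Fin n))} {S T : Finset (Fin n)}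

lemma IsGraph.sum_edgesIn_swap_sub (hG : IsGraph G) (hST : Disjoint S T) :
    ∑ p ∈ S ×ˢ T, ((edgesIn G (insert p.2 (S.erase p.1)) : ℝ) - edgesIn G S)
      = ((S.card : ℝ) - 1) * edgesBetween G S T - 2 * T.card * edgesIn G S := by
  have swap_one : ∀ p ∈ S ×ˢ T, (edgesIn G (insert p.2 (S.erase p.1)) : ℝ) - edgesIn G S
      = dS G S p.2 - dS G S p.1 - (if s(p.1, p.2) ∈ G then 1 else 0 : ℕ) := by
    intro p hp
    obtain ⟨hx, hy⟩ := mem_product.1 hp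
    have swap_add := congrArg (Nat.cast : ℕ → ℝ)
      (hG.edgesIn_swap_add hx (disjoint_right.1 hST hy))
    simp only [Nat.cast_add] at swap_add
    linear_combination swap_add
  have handshake : (∑ x ∈ S, (dS G S x : ℝ)) = 2 * edgesIn G S := by
    exact_mod_cast hG.edgesBetween_self S
  have crossing_by_degree : (∑ y ∈ T, (dS G S y : ℝ)) = edgesBetween G S T := by
    rw [edgesBetween, Nat.cast_sum]
  have crossing_by_pair :
      (∑ x ∈ S, ∑ y ∈ T, ((if s(x, y) ∈ G then 1 else 0 : ℕ) : ℝ)) = edgesBetween G S T := by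
    exact_mod_cast (edgesBetween_eq_sum G S T).symm
  rw [sum_congr rfl swap_one, sum_product]
  simp only [sum_sub_distrib, sum_const, nsmul_eq_mul, ← mul_sum, handshake, crossing_by_degree,
    crossing_by_pair]
  ring

lemma Exu_product_comm {α β : Type*} (A : Finset α) (B : Finset β) (f : α × β → ℝ) :
    Exu (A ×ˢ B) f = Exu (B ×ˢ A) (f ∘ Prod.swap) := by
  rw [Exu, Exu, sum_product, sum_product_right, card_product, card_product, mul_comm A.card]
  rfl

lemma Kr_weighted_sum (k l : ℕ) :
    ((k + l : ℕ) - 1 + l : ℝ) * Kr k + (k - 1) * Kr l = (k - 1) * Nr (k + l) := by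
  simp only [Kr, Nr]
  push_cast
  ring

lemma Nr_ne_zero {n : ℕ} (hn : 2 ≤ n) : Nr n ≠ 0 := by
  have : (2 : ℝ) ≤ n := by exact_mod_cast hn
  unfold Nr
  nlinarith

lemma IsGraph.Exu_edgesIn_swap_sub (hG : IsGraph G) (hS : S.Nonempty) (hSc : Sᶜ.Nonempty) :
    Exu (S ×ˢ Sᶜ) (fun p => (edgesIn G (insert p.2 (S.erase p.1)) : ℝ) - edgesIn G S)
      = -(((n : ℝ) - 1 + Sᶜ.card) / (S.card * Sᶜ.card))
          * (edgesIn G S - Kr S.card * G.card / Nr n)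
        - ((S.card - 1) / (S.card * Sᶜ.card))
          * (edgesIn G Sᶜ - Kr Sᶜ.card * G.card / Nr n) := by
  have card_add : S.card + Sᶜ.card = n := by rw [card_add_card_compl, Fintype.card_fin]
  have two_le : 2 ≤ n := by have := hS.card_pos; have := hSc.card_pos; omega
  have edge_count : (G.card : ℝ) = edgesIn G S + edgesIn G Sᶜ + edgesBetween G S Sᶜ := by
    exact_mod_cast hG.card_eq_edgesIn_add_compl S
  have density_cancels : ((n : ℝ) - 1 + Sᶜ.card) * (Kr S.card * G.card / Nr n)
      + (S.card - 1) * (Kr Sᶜ.card * G.card / Nr n) = (S.card - 1) * G.card := by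
    have weights := Kr_weighted_sum S.card Sᶜ.card
    rw [card_add] at weights
    field_simp [Nr_ne_zero two_le]
    linear_combination (G.card : ℝ) * weights
  have numerator : ((S.card : ℝ) - 1) * edgesBetween G S Sᶜ - 2 * Sᶜ.card * edgesIn G S
      = -((n : ℝ) - 1 + Sᶜ.card) * (edgesIn G S - Kr S.card * G.card / Nr n)
        - (S.card - 1) * (edgesIn G Sᶜ - Kr Sᶜ.card * G.card / Nr n) := by
    have card_add' : (n : ℝ) = S.card + Sᶜ.card := by exact_mod_cast card_add.symm
    linear_combination edgesIn G S * card_add' - density_cancels - (S.card - 1 : ℝ) * edge_count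
  rw [Exu, hG.sum_edgesIn_swap_sub disjoint_compl_right, numerator, card_product, Nat.cast_mul]
  ring

end Swap

/-- Lemma 2.2: `E[W' - W | W] = -ΛW`, in expanded form.
For any graph `G` on `[n]` with `M` edges, `1 ≤ k ≤ n-1`, `k̄ = n-k`, and any `k`-set `S`,
with `x` uniform on `S`, `x̄` uniform on `S̄` independent, `S' = (S∖{x})∪{x̄}`,
`S̄' = (S̄∖{x̄})∪{x}`, the two displayed expectation identities hold. -/
theorem stmt_3 (n M k : ℕ) (G : Finset (Sym2 (Fin n))) (hG : IsGraph G) (hM : G.card = M)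
    (hk1 : 1 ≤ k) (hk2 : k ≤ n - 1) (S : Finset (Fin n)) (hS : S.card = k) :
    Exu (S ×ˢ Sᶜ) (fun xp => (edgesIn G (insert xp.2 (S.erase xp.1)) : ℝ) - (edgesIn G S : ℝ))
      = -(((n : ℝ) - 1 + ((n - k : ℕ) : ℝ)) / ((k : ℝ) * ((n - k : ℕ) : ℝ)))
          * ((edgesIn G S : ℝ) - Kr k * (M : ℝ) / Nr n)
        - (((k : ℝ) - 1) / ((k : ℝ) * ((n - k : ℕ) : ℝ)))
          * ((edgesIn G Sᶜ : ℝ) - Kr (n - k) * (M : ℝ) / Nr n)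
    ∧
    Exu (S ×ˢ Sᶜ) (fun xp => (edgesIn G (insert xp.1 (Sᶜ.erase xp.2)) : ℝ) - (edgesIn G Sᶜ : ℝ))
      = -(((n : ℝ) - 1 + (k : ℝ)) / ((k : ℝ) * ((n - k : ℕ) : ℝ)))
          * ((edgesIn G Sᶜ : ℝ) - Kr (n - k) * (M : ℝ) / Nr n)
        - ((((n - k : ℕ) : ℝ) - 1) / ((k : ℝ) * ((n - k : ℕ) : ℝ)))
          * ((edgesIn G S : ℝ) - Kr k * (M : ℝ) / Nr n) := by
  subst hM hS
  have card_compl_eq : Sᶜ.card = n - S.card := by rw [card_compl, Fintype.card_fin]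
  have hS : S.Nonempty := card_pos.1 hk1
  have hSc : Sᶜ.Nonempty := card_pos.1 (by omega)
  rw [← card_compl_eq]
  refine ⟨hG.Exu_edgesIn_swap_sub hS hSc, ?_⟩
  have swap_compl := hG.Exu_edgesIn_swap_sub (S := Sᶜ) hSc (by rwa [compl_compl])
  rw [compl_compl, mul_comm (Sᶜ.card : ℝ)] at swap_compl
  rw [Exu_product_comm]
  exact swap_compl
end
end
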